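/- arXiv:1310.4581 — 4 statements merged into one kernel-verified Lean document; each statement's English description precedes it below -/
import Mathlib

section
/- Stability of classical Rényi 2-extractors against quantum side information: let N, M be finite sets, D ≥ 1, k ∈ ℝ, ε > 0, and let f_1, …, f_D : N → M be functions forming a strong (k, ε) Rényi 2-extractor, i.e., for every function P : N → [0, ∞) with ∑_{x∈N} P(x)² ≤ 2^{−k} it holds that (1/D²) ∑_{i=1}^{D} ∑_{m∈M} (∑_{x : f_i(x)=m} P(x))² ≤ (ε+1)/(|M|·D). Then for every classical-quantum positive semidefinite operator ρ_{NR} = ∑_{x∈N} |x⟩⟨x| ⊗ ρ_R^x on C^N ⊗ H_R (each ρ_R^x positive semidefinite) satisfying ∑_{x∈N} Tr[ρ_R^x ρ_R^{−1/2} ρ_R^x ρ_R^{−1/2}] ≤ 2^{−k}, where ρ_R = ∑_{x∈N} ρ_R^x, it holds that (1/D²) ∑_{i=1}^{D} ∑_{m∈M} Tr[σ_R^{i,m} ρ_R^{−1/2} σ_R^{i,m} ρ_R^{−1/2}] ≤ (ε+1)/(|M|·D), where σ_R^{i,m} = ∑_{x : f_i(x)=m} ρ_R^x. (In entropy language: H₂(N|R)_ρ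 ≥ k implies H₂(MD|R)_σ ≥ log(|M|·D/(ε+1)) for the extractor output σ_{MDR} = (1/D) ∑_i ρ_{f_i(N)R} ⊗ |i⟩⟨i|.) -/
open scoped Kronecker ComplexOrder
open Matrix

noncomputable section

/-- Generalized inverse square root of a Hermitian matrix: it vanishes on the kernel and acts
as `λ^{-1/2}` on each eigenspace with eigenvalue `λ > 0` (junk value `0` otherwise). -/
def invSqrt {n : Type*} [Fintype n] [DecidableEq n] (A : Matrix n n ℂ) : Matrix n n ℂ :=
  if hA : A.IsHermitian then
    (hA.eigenvectorUnitary : Matrix n n ℂ) *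
      Matrix.diagonal (fun i => (Real.sqrt (hA.eigenvalues i)⁻¹ : ℂ)) *
      ((hA.eigenvectorUnitary : Matrix n n ℂ))ᴴ
  else 0

/-!
Factor the positive semidefinite operator `T = ρ_R^{-1/2}` as `Bᴴ * B`. For Hermitian `A`, cyclicity
of the trace turns `Tr[A T A T]` into the squared Frobenius norm of `B * A * Bᴴ`. Hence the function
`P x = ‖B * ρ x * Bᴴ‖` is an admissible input for the classical extractor, and by the triangle
inequality the collision sums of `P` dominate those of the quantum output.
-/

theorem posSemidef_invSqrt {n : Type*} [Fintype n] [DecidableEq n] (A : Matrix n n ℂ) :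
    (invSqrt A).PosSemidef := by
  unfold invSqrt
  split_ifs with hA
  · refine PosSemidef.mul_mul_conjTranspose_same (PosSemidef.diagonal fun i => ?_) _
    exact Complex.zero_le_real.mpr (Real.sqrt_nonneg _)
  · exact PosSemidef.zero

section FrobeniusNorm

open scoped Matrix.Norms.Frobenius

variable {m n 𝕜 : Type*} [Fintype m] [Fintype n] [RCLike 𝕜]

theorem frobenius_norm_sq_eq_re_trace (A : Matrix m n 𝕜) :
    ‖A‖ ^ 2 = RCLike.re (Aᴴ * A).trace := by
  rw [frobenius_norm_def, ← Real.sqrt_eq_rpow, Real.sq_sqrt (by positivity), Finset.sum_comm]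
  simp only [Real.rpow_two, trace, diag_apply, mul_apply, conjTranspose_apply, RCLike.star_def,
    RCLike.conj_mul, map_sum, ← RCLike.ofReal_pow, RCLike.ofReal_re]

theorem frobenius_norm_sq_mul_mul_conjTranspose (B : Matrix m n 𝕜) {A : Matrix n n 𝕜}
    (hA : A.IsHermitian) :
    ‖B * A * Bᴴ‖ ^ 2 = RCLike.re (A * (Bᴴ * B) * A * (Bᴴ * B)).trace := by
  rw [frobenius_norm_sq_eq_re_trace, (isHermitian_mul_mul_conjTranspose B hA).eq,
    Matrix.mul_assoc B A Bᴴ, Matrix.mul_assoc B, trace_mul_comm]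
  simp only [Matrix.mul_assoc]

end FrobeniusNorm

open scoped Matrix.Norms.Frobenius in
theorem renyi2_extractor_stable_qsi_general {ι N M R 𝕜 : Type*} [Fintype ι] [Fintype N]
    [Fintype M] [DecidableEq M] [Fintype R] [RCLike 𝕜] (f : ι → N → M) {a b c : ℝ} (hc : 0 ≤ c)
    (hext : ∀ P : N → ℝ, (∀ x, 0 ≤ P x) → ∑ x, P x ^ 2 ≤ a →
      c * ∑ i, ∑ m, (∑ x with f i x = m, P x) ^ 2 ≤ b)
    {T : Matrix R R 𝕜} (hT : T.PosSemidef)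
    {ρ : N → Matrix R R 𝕜} (hρ : ∀ x, (ρ x).IsHermitian)
    (hcond : ∑ x, RCLike.re (ρ x * T * ρ x * T).trace ≤ a) :
    c * ∑ i, ∑ m, RCLike.re
      ((∑ x with f i x = m, ρ x) * T * (∑ x with f i x = m, ρ x) * T).trace ≤ b := by
  classical
  obtain ⟨B, rfl⟩ : ∃ B : Matrix R R 𝕜, T = Bᴴ * B := by
    open scoped MatrixOrder in
    exact CStarAlgebra.nonneg_iff_eq_star_mul_self.mp hT.nonneg
  have hsum (s : Finset N) : (∑ x ∈ s, ρ x).IsHermitian := isSelfAdjoint_sum s fun x _ => hρ x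
  simp only [← frobenius_norm_sq_mul_mul_conjTranspose B (hρ _)] at hcond
  simp_rw [← frobenius_norm_sq_mul_mul_conjTranspose B (hsum _), Matrix.mul_sum, Matrix.sum_mul]
  calc
    c * ∑ i, ∑ m, ‖∑ x with f i x = m, B * ρ x * Bᴴ‖ ^ 2
    _ ≤ c * ∑ i, ∑ m, (∑ x with f i x = m, ‖B * ρ x * Bᴴ‖) ^ 2 := by
      gcongr
      exact norm_sum_le _ _
    _ ≤ b := hext (fun x => ‖B * ρ x * Bᴴ‖) (fun _ => norm_nonneg _) hcond

/-- **Stability of classical Rényi 2-extractors against quantum side information.**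
The classical-quantum operator `ρ_{NR} = Σ_x |x⟩⟨x| ⊗ ρ x` is described by its blocks
`ρ x`, and `H₂(N|R)_ρ ≥ k` resp. `H₂(MD|R)_σ ≥ log(|M|·D/(ε+1))` are written out via the
corresponding traces against `ρ_R^{-1/2} (·) ρ_R^{-1/2}` with `ρ_R = Σ_x ρ x`. -/
theorem renyi2_extractor_stable_qsi
    {N M : Type*} [Fintype N] [Fintype M] [DecidableEq N] [DecidableEq M]
    {R : Type*} [Fintype R] [DecidableEq R]
    (D : ℕ) (hD : 1 ≤ D) (k ε : ℝ) (hε : 0 < ε)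
    (f : Fin D → N → M)
    (hext : ∀ P : N → ℝ, (∀ x, 0 ≤ P x) → (∑ x, P x ^ 2) ≤ (2 : ℝ) ^ (-k) →
      (1 / (D : ℝ) ^ 2) *
          ∑ i, ∑ m, (∑ x ∈ Finset.univ.filter (fun x => f i x = m), P x) ^ 2 ≤
        (ε + 1) / ((Fintype.card M : ℝ) * D))
    (ρ : N → Matrix R R ℂ) (hρ : ∀ x, (ρ x).PosSemidef)
    (hcond : ∑ x, (Matrix.trace (ρ x * invSqrt (∑ x', ρ x') * ρ x *
      invSqrt (∑ x', ρ x'))).re ≤ (2 : ℝ) ^ (-k)) :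
    (1 / (D : ℝ) ^ 2) *
        ∑ i, ∑ m,
          (Matrix.trace ((∑ x ∈ Finset.univ.filter (fun x => f i x = m), ρ x) *
            invSqrt (∑ x', ρ x') *
            (∑ x ∈ Finset.univ.filter (fun x => f i x = m), ρ x) *
            invSqrt (∑ x', ρ x'))).re ≤
      (ε + 1) / ((Fintype.card M : ℝ) * D) :=
  renyi2_extractor_stable_qsi_general f (by positivity) hext (posSemidef_invSqrt _)
    (fun x => (hρ x).isHermitian) hcond
end
end

section
/- The pretty good guessing probability dominates the pretty good recovery fidelity (dephasing increases conditional Rényi 2-entropy by at most log of the dimension): let ρ_AB be a state on H_A ⊗ H_B with d_A = dim H_A and ρ_B = Tr_A[ρ_AB], let {|k⟩}_{k=1}^{d_A} be any orthonormal basis of H_A, and let ρ_KB = ∑_{k=1}^{d_A} (|k⟩⟨k| ⊗ 1_B) ρ_AB (|k⟩⟨k| ⊗ 1_B). Then Tr[ρ_KB (1_A ⊗ ρ_B^{-1/2}) ρ_KB (1_A ⊗ ρ_B^{-1/2})] ≥ (1/d_A) · Tr[ρ_AB (1_A ⊗ ρ_B^{-1/2}) ρ_AB (1_A ⊗ ρ_B^{-1/2})];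 equivalently, H₂(K|B)_{ρ_KB} ≤ H₂(A|B)_{ρ_AB} + log d_A. -/
/-!
Write `P x = ∑ k, e k * x * e k` for the pinching by complete orthogonal projections
`e 1, …, e d`. Expanding `∑ k l, (e k - e l) * x * (e k - e l) = 2 (d P x - x)` gives the pinching
inequality `x ≤ d P x` for `x ≥ 0`. Pairing it with `x ≥ 0` after conjugation by `W` yields
`Tr[x W x Wᴴ] ≤ d Tr[x W P(x) Wᴴ]`. If `W` commutes with the projections, as `1 ⊗ σ` does with
`|k⟩⟨k| ⊗ 1`, then `W P(x) Wᴴ` is fixed by `P`; since `Tr[P(x) y] = Tr[x P(y)]`, the remaining `x`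
may be replaced by `P x`.
-/

open scoped Kronecker ComplexOrder
open Matrix

noncomputable section

/-- Partial trace over the left tensor factor. -/
def ptraceLeft {α β : Type*} [Fintype α] (M : Matrix (α × β) (α × β) ℂ) : Matrix β β ℂ :=
  Matrix.of fun i j => ∑ a, M (a, i) (a, j)

/-- Rank-one projector `|v⟩⟨v|`. -/
def proj {n : Type*} (v : n → ℂ) : Matrix n n ℂ := Matrix.vecMulVec v (star v)

section Pinching

variable {R ι : Type*} [Fintype ι]

/-- The pinching `x ↦ ∑ k, e k * x * e k` by a family `e`. For orthogonal projections `e k` summing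
to `1` it is the dephasing channel; the definition itself requires nothing of `e`. -/
def pinching [NonUnitalNonAssocSemiring R] (e : ι → R) (x : R) : R := ∑ k, e k * x * e k

theorem pinching_mul_mul_of_commute [NonUnitalSemiring R] {e : ι → R} {a b : R}
    (ha : ∀ k, Commute (e k) a) (hb : ∀ k, Commute (e k) b) (x : R) :
    pinching e (a * x * b) = a * pinching e x * b := by
  simp only [pinching, Finset.mul_sum, Finset.sum_mul]
  refine Finset.sum_congr rfl fun k _ ↦ ?_
  calc e k * (a * x * b) * e k = (e k * a) * x * (b * e k) := by simp only [mul_assoc]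
    _ = (a * e k) * x * (e k * b) := by rw [(ha k).eq, (hb k).eq]
    _ = a * (e k * x * e k) * b := by simp only [mul_assoc]

theorem pinching_pinching [Semiring R] {e : ι → R} (he : OrthogonalIdempotents e) (x : R) :
    pinching e (pinching e x) = pinching e x := by
  classical
  refine Finset.sum_congr rfl fun k _ ↦ ?_
  have left_mul : e k * pinching e x = e k * x * e k := by
    simp [pinching, Finset.mul_sum, ← mul_assoc, he.mul_eq]
  rw [left_mul, mul_assoc, (he.idem k).eq]

theorem sum_sum_sub_mul_mul_sub [Ring R] {e : ι → R} (he : ∑ k, e k = 1) (x : R) :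
    ∑ k, ∑ l, (e k - e l) * x * (e k - e l) =
      2 • (Fintype.card ι • pinching e x - x) := by
  have cross : ∑ k, ∑ l, e k * x * e l = x := by
    simp only [← Finset.mul_sum, ← Finset.sum_mul, he, one_mul, mul_one]
  have cross' : ∑ k, ∑ l, e l * x * e k = x := by rw [Finset.sum_comm, cross]
  have expand (k l : ι) : (e k - e l) * x * (e k - e l) =
      e k * x * e k + e l * x * e l - e k * x * e l - e l * x * e k := by noncomm_ring
  simp only [expand, Finset.sum_sub_distrib, Finset.sum_add_distrib, cross, cross',
    Finset.sum_const, Finset.card_univ, ← Finset.smul_sum, pinching]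
  abel

theorem le_card_nsmul_pinching [Ring R] [StarRing R] [PartialOrder R] [StarOrderedRing R]
    [Module ℝ R] [PosSMulMono ℝ R] {e : ι → R} (he : ∑ k, e k = 1)
    (hsa : ∀ k, IsSelfAdjoint (e k)) {x : R} (hx : 0 ≤ x) :
    x ≤ Fintype.card ι • pinching e x := by
  have two_smul_nonneg : 0 ≤ (2 : ℝ) • (Fintype.card ι • pinching e x - x) := by
    rw [ofNat_smul_eq_nsmul ℝ 2, ← sum_sum_sub_mul_mul_sub he]
    exact Finset.sum_nonneg fun k _ ↦ Finset.sum_nonneg fun l _ ↦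
      ((hsa k).sub (hsa l)).conjugate_nonneg hx
  rw [← sub_nonneg]
  simpa using smul_nonneg (by positivity : (0 : ℝ) ≤ 2⁻¹) two_smul_nonneg

theorem trace_pinching_mul {n : Type*} [Fintype n] [NonUnitalCommSemiring R]
    (e : ι → Matrix n n R) (x y : Matrix n n R) :
    (pinching e x * y).trace = (x * pinching e y).trace := by
  simp only [pinching, Finset.sum_mul, Finset.mul_sum, trace_sum]
  refine Finset.sum_congr rfl fun k _ ↦ ?_
  rw [Matrix.mul_assoc, Matrix.mul_assoc, trace_mul_comm]
  simp only [Matrix.mul_assoc]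

theorem trace_pinching_mul_mul_pinching_mul {n : Type*} [Fintype n] [DecidableEq n]
    [CommSemiring R] {e : ι → Matrix n n R} (he : OrthogonalIdempotents e) {V W : Matrix n n R}
    (hV : ∀ k, Commute (e k) V) (hW : ∀ k, Commute (e k) W) (x : Matrix n n R) :
    (pinching e x * V * pinching e x * W).trace = (x * V * pinching e x * W).trace :=
  calc (pinching e x * V * pinching e x * W).trace
      = (pinching e x * (V * pinching e x * W)).trace := by simp only [Matrix.mul_assoc]
    _ = (x * pinching e (V * pinching e x * W)).trace := trace_pinching_mul ..
    _ = (x * (V * pinching e x * W)).trace := by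
      rw [pinching_mul_mul_of_commute hV hW, pinching_pinching he]
    _ = (x * V * pinching e x * W).trace := by simp only [Matrix.mul_assoc]

end Pinching

section TraceInequality

open scoped MatrixOrder

variable {𝕜 n ι : Type*} [RCLike 𝕜] [Fintype n]

theorem trace_mul_nonneg {x y : Matrix n n 𝕜} (hx : 0 ≤ x) (hy : 0 ≤ y) : 0 ≤ (x * y).trace := by
  classical
  obtain ⟨c, rfl⟩ := CStarAlgebra.nonneg_iff_eq_star_mul_self.mp hx
  rw [Matrix.mul_assoc, trace_mul_comm]
  exact (star_right_conjugate_nonneg hy c).posSemidef.trace_nonneg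

theorem trace_mul_le_trace_mul_of_nonneg_left {x y z : Matrix n n 𝕜} (hx : 0 ≤ x) (hyz : y ≤ z) :
    (x * y).trace ≤ (x * z).trace := by
  rw [← sub_nonneg, ← trace_sub, ← Matrix.mul_sub]
  exact trace_mul_nonneg hx (sub_nonneg.mpr hyz)

theorem trace_mul_mul_mul_le_card_mul_trace_pinching [Fintype ι] [DecidableEq n]
    {e : ι → Matrix n n 𝕜} {W : Matrix n n 𝕜} (he : CompleteOrthogonalIdempotents e)
    (hsa : ∀ k, IsSelfAdjoint (e k)) (hW : ∀ k, Commute (e k) W) {x : Matrix n n 𝕜} (hx : 0 ≤ x) :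
    (x * W * x * Wᴴ).trace ≤
      Fintype.card ι * (pinching e x * W * pinching e x * Wᴴ).trace := by
  have hW_star (k : ι) : Commute (e k) Wᴴ := (hsa k).star_eq ▸ (hW k).star_star
  have conj_le : W * x * Wᴴ ≤ W * (Fintype.card ι • pinching e x) * Wᴴ :=
    star_right_conjugate_le_conjugate (le_card_nsmul_pinching he.complete hsa hx) W
  calc (x * W * x * Wᴴ).trace = (x * (W * x * Wᴴ)).trace := by simp only [Matrix.mul_assoc]
    _ ≤ (x * (W * (Fintype.card ι • pinching e x) * Wᴴ)).trace :=
      trace_mul_le_trace_mul_of_nonneg_left hx conj_le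
    _ = Fintype.card ι * (x * W * pinching e x * Wᴴ).trace := by
      rw [← nsmul_eq_mul, ← trace_smul]
      simp only [mul_smul_comm, smul_mul_assoc, Matrix.mul_assoc]
    _ = Fintype.card ι * (pinching e x * W * pinching e x * Wᴴ).trace := by
      rw [trace_pinching_mul_mul_pinching_mul he.toOrthogonalIdempotents hW hW_star]

end TraceInequality

theorem isHermitian_invSqrt {n : Type*} [Fintype n] [DecidableEq n] (M : Matrix n n ℂ) :
    (invSqrt M).IsHermitian := by
  unfold invSqrt
  split_ifs with hM
  · refine isHermitian_mul_mul_conjTranspose _ (isHermitian_diagonal_of_self_adjoint _ ?_)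
    exact funext fun _ ↦ Complex.conj_ofReal _
  · exact isHermitian_zero

theorem isHermitian_proj {n : Type*} (v : n → ℂ) : (proj v).IsHermitian := by
  simp [Matrix.IsHermitian, proj, conjTranspose_vecMulVec]

theorem completeOrthogonalIdempotents_proj {n : Type*} [Fintype n] [DecidableEq n]
    {b : n → n → ℂ} (hb : ∀ k l, star (b k) ⬝ᵥ b l = if k = l then 1 else 0) :
    CompleteOrthogonalIdempotents fun k ↦ proj (b k) := by
  refine CompleteOrthogonalIdempotents.iff_ortho_complete.mpr ⟨fun k l hkl ↦ ?_, ?_⟩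
  · simp [proj, vecMulVec_mul_vecMulVec, hb, hkl]
  · have isometry : (of b)ᵀᴴ * (of b)ᵀ = 1 := ext fun k l ↦ (hb k l).trans (one_apply ..).symm
    rw [← mul_eq_one_comm.mp isometry]
    ext x y
    simp [proj, mul_apply, Matrix.sum_apply, vecMulVec_apply]

theorem completeOrthogonalIdempotents_kronecker_one {R m n ι : Type*} [Semiring R] [Fintype m]
    [DecidableEq m] [Fintype n] [DecidableEq n] [Fintype ι] {e : ι → Matrix m m R}
    (he : CompleteOrthogonalIdempotents e) :
    CompleteOrthogonalIdempotents fun k ↦ e k ⊗ₖ (1 : Matrix n n R) := by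
  simpa only [kronecker_one] using!
    he.map ((blockDiagonalRingHom m n R).comp (Pi.constRingHom n (Matrix m m R)))

theorem pretty_good_guessing_dominates_recovery_general
    {A B K : Type*} [Fintype A] [Fintype B] [DecidableEq A] [DecidableEq B] [Fintype K] [Nonempty K]
    {ρ : Matrix (A × B) (A × B) ℂ} (hρ : ρ.PosSemidef) {P : K → Matrix A A ℂ}
    (hP : CompleteOrthogonalIdempotents P) (hPherm : ∀ k, (P k).IsHermitian) (σ : Matrix B B ℂ) :
    (1 / (Fintype.card K : ℝ)) *
        (Matrix.trace (ρ * ((1 : Matrix A A ℂ) ⊗ₖ σ) * ρ * ((1 : Matrix A A ℂ) ⊗ₖ σᴴ))).re ≤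
      (Matrix.trace (pinching (fun k ↦ P k ⊗ₖ (1 : Matrix B B ℂ)) ρ * ((1 : Matrix A A ℂ) ⊗ₖ σ) *
        pinching (fun k ↦ P k ⊗ₖ (1 : Matrix B B ℂ)) ρ * ((1 : Matrix A A ℂ) ⊗ₖ σᴴ))).re := by
  have herm (k : K) : IsSelfAdjoint (P k ⊗ₖ (1 : Matrix B B ℂ)) := by
    rw [IsSelfAdjoint, star_eq_conjTranspose, conjTranspose_kronecker, hPherm, conjTranspose_one]
  have comm (k : K) : Commute (P k ⊗ₖ (1 : Matrix B B ℂ)) ((1 : Matrix A A ℂ) ⊗ₖ σ) := by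
    simp only [commute_iff_eq, ← mul_kronecker_mul, mul_one, one_mul]
  have key := trace_mul_mul_mul_le_card_mul_trace_pinching
    (completeOrthogonalIdempotents_kronecker_one hP) herm comm hρ.nonneg
  rw [one_div, inv_mul_le_iff₀ (by positivity)]
  simpa [conjTranspose_kronecker] using (Complex.le_def.mp key).1

/-- **The pretty good guessing probability dominates the pretty good recovery fidelity**
(dephasing in any orthonormal basis increases the conditional Rényi 2-entropy by at most
the log of the dimension), in trace form:
`Tr[ρ_KB (1⊗ρ_B^{-1/2}) ρ_KB (1⊗ρ_B^{-1/2})] ≥ (1/d_A)·Tr[ρ_AB (1⊗ρ_B^{-1/2}) ρ_AB (1⊗ρ_B^{-1/2})]`. -/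
theorem pretty_good_guessing_dominates_recovery
    {A B : Type*} [Fintype A] [Fintype B] [DecidableEq A] [DecidableEq B]
    (ρ : Matrix (A × B) (A × B) ℂ) (hρ : ρ.PosSemidef) (hρtr : ρ.trace = 1)
    (b : A → A → ℂ)
    (horth : ∀ k k', (∑ x, (starRingEnd ℂ) (b k x) * b k' x) = if k = k' then 1 else 0)
    (ρK : Matrix (A × B) (A × B) ℂ)
    (hρK : ρK = ∑ k, (proj (b k) ⊗ₖ (1 : Matrix B B ℂ)) * ρ *
      (proj (b k) ⊗ₖ (1 : Matrix B B ℂ))) :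
    (1 / (Fintype.card A : ℝ)) *
        (Matrix.trace (ρ * ((1 : Matrix A A ℂ) ⊗ₖ invSqrt (ptraceLeft ρ)) * ρ *
          ((1 : Matrix A A ℂ) ⊗ₖ invSqrt (ptraceLeft ρ)))).re ≤
      (Matrix.trace (ρK * ((1 : Matrix A A ℂ) ⊗ₖ invSqrt (ptraceLeft ρ)) * ρK *
        ((1 : Matrix A A ℂ) ⊗ₖ invSqrt (ptraceLeft ρ)))).re := by
  have : Nonempty A := by
    by_contra! _
    simp [Matrix.trace] at hρtr
  subst hρK
  simpa only [(isHermitian_invSqrt (ptraceLeft ρ)).eq] using!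
    pretty_good_guessing_dominates_recovery_general hρ
      (completeOrthogonalIdempotents_proj horth) (fun k ↦ isHermitian_proj (b k))
      (invSqrt (ptraceLeft ρ))
end
end

section
/- Unitary 2-designs are quantum Rényi 2-extractors: let {U_1, …, U_L} be a unitary 2-design on C^N, and fix a tensor decomposition C^N = C^M ⊗ C^{M'} (so N = M·M'). Then for every positive semidefinite operator ρ on C^N: (1/L) ∑_{i=1}^{L} Tr[ (Tr_{M'}[U_i ρ U_i†])² ] ≤ (Tr ρ)²/M + (M/N) · Tr[ρ²]. In particular, a unitary 2-design is a strong (k, ε)-quantum Rényi 2-extractor with output size m = (n + k)/2 − (1/2) log(1/ε), where n = log N and M = 2^m. -/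
open scoped Kronecker ComplexOrder
open Matrix MeasureTheory

noncomputable section

instance matrixMeasurableSpace {ι κ : Type*} : MeasurableSpace (Matrix ι κ ℂ) :=
  inferInstanceAs (MeasurableSpace (ι → κ → ℂ))

/-- A finite family of unitaries on `ℂ^ι` is a unitary 2-design if the average of
`(U_i ⊗ U_i) M (U_i ⊗ U_i)†` over the family coincides (entrywise) with the corresponding
integral over the full unitary group with respect to the Haar probability measure.  The
Haar probability measure is characterized as a left-invariant (Borel) probability measure
on the compact group `U(ι)` — on this group such a measure is unique, so we quantify over
all of them. -/
def IsUnitaryTwoDesign {ι : Type*} [Fintype ι] [DecidableEq ι] {L : ℕ}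
    (U : Fin L → Matrix ι ι ℂ) : Prop :=
  (∀ i, U i ∈ Matrix.unitaryGroup ι ℂ) ∧
    ∀ μ : Measure (Matrix.unitaryGroup ι ℂ),
      IsProbabilityMeasure μ → μ.IsMulLeftInvariant →
      ∀ M : Matrix (ι × ι) (ι × ι) ℂ, ∀ a b : ι × ι,
        ((L : ℂ))⁻¹ * (∑ i, (U i ⊗ₖ U i) * M * ((U i) ⊗ₖ (U i))ᴴ) a b =
          ∫ V : Matrix.unitaryGroup ι ℂ,
            ((((V : Matrix ι ι ℂ) ⊗ₖ (V : Matrix ι ι ℂ)) * M *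
              (((V : Matrix ι ι ℂ) ⊗ₖ (V : Matrix ι ι ℂ)))ᴴ) a b) ∂μ

/-- Partial trace over the right tensor factor. -/
def ptraceRight {α β : Type*} [Fintype β] (M : Matrix (α × β) (α × β) ℂ) : Matrix α α ℂ :=
  Matrix.of fun i j => ∑ b, M (i, b) (j, b)

/-! The Haar average `X = ∫ (V ⊗ V) (ρ ⊗ ρ) (V ⊗ V)† dμ`, which is also the average over the design,
commutes with every `W ⊗ W`. The span of these matrices contains the Kronecker sums `A ⊗ 1 + 1 ⊗ A`,
and commuting with those already forces `X = a • 1 + b • F`, with `F` the flip of the two copies of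
`ℂ^M ⊗ ℂ^M'`. The scalars `a`, `b` are encoded in `tr X = (tr ρ)²` and `tr (X F) = tr (ρ²)`, while
the average purity of the reduced state is the trace of `X` against the flip of the two copies of
`ℂ^M` alone. The claimed bound exceeds this trace by exactly `a M + b M'`, which is nonnegative
because `tr X` and `tr (X F)` are. -/

section HaarMeasure

variable {ι : Type*} [Fintype ι] [DecidableEq ι]

theorem borelSpace_unitaryGroup : BorelSpace (unitaryGroup ι ℂ) :=
  have : BorelSpace (Matrix ι ι ℂ) := inferInstanceAs (BorelSpace (ι → ι → ℂ))
  Subtype.borelSpace _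

theorem isCompact_unitaryGroup :
    IsCompact ((unitaryGroup ι ℂ : Submonoid (Matrix ι ι ℂ)) : Set (Matrix ι ι ℂ)) := by
  have hbox : IsCompact (Set.univ.pi fun _ : ι ↦ Set.univ.pi fun _ : ι ↦
      Metric.closedBall (0 : ℂ) 1) :=
    isCompact_univ_pi fun _ ↦ isCompact_univ_pi fun _ ↦ isCompact_closedBall _ _
  have hclosed : IsClosed ((unitaryGroup ι ℂ : Submonoid (Matrix ι ι ℂ)) : Set (Matrix ι ι ℂ)) :=
    isClosed_unitary
  refine IsCompact.of_isClosed_subset (X := ι → ι → ℂ) hbox hclosed ?_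
  intro V hV i _ j _
  simpa only [mem_closedBall_zero_iff] using entry_norm_bound_of_unitary hV i j

theorem compactSpace_unitaryGroup : CompactSpace (unitaryGroup ι ℂ) :=
  isCompact_iff_compactSpace.mp isCompact_unitaryGroup

variable (ι) in
theorem exists_isProbabilityMeasure_isMulLeftInvariant_unitaryGroup :
    ∃ μ : Measure (unitaryGroup ι ℂ), IsProbabilityMeasure μ ∧ μ.IsMulLeftInvariant := by
  have := borelSpace_unitaryGroup (ι := ι)
  have := compactSpace_unitaryGroup (ι := ι)
  refine ⟨Measure.haarMeasure ⊤, ⟨?_⟩, inferInstance⟩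
  simpa only [TopologicalSpace.PositiveCompacts.coe_top] using
    Measure.haarMeasure_self (K₀ := (⊤ : TopologicalSpace.PositiveCompacts (unitaryGroup ι ℂ)))

end HaarMeasure

section EntrywiseIntegral

variable {Ω m n : Type*}

theorem map_eq_sum_apply_mul_map_single [Fintype m] [Fintype n] [DecidableEq m] [DecidableEq n]
    (φ : Matrix m n ℂ →ₗ[ℂ] ℂ) (A : Matrix m n ℂ) :
    φ A = ∑ a, ∑ b, A a b * φ (single a b 1) := by
  have hentry (a : m) (b : n) : A a b * φ (single a b 1) = φ (single a b (A a b)) := by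
    rw [← smul_eq_mul, ← map_smul, smul_single, smul_eq_mul, mul_one]
  simp only [hentry, ← map_sum, ← matrix_eq_sum_single]

theorem map_of_integral [Finite m] [Finite n] [MeasurableSpace Ω] {μ : Measure Ω}
    {f : Ω → Matrix m n ℂ} (hf : ∀ a b, Integrable (fun ω ↦ f ω a b) μ) (φ : Matrix m n ℂ →ₗ[ℂ] ℂ) :
    φ (of fun a b ↦ ∫ ω, f ω a b ∂μ) = ∫ ω, φ (f ω) ∂μ := by
  classical
  cases nonempty_fintype m
  cases nonempty_fintype n
  have hterm (a : m) (b : n) : Integrable (fun ω ↦ f ω a b * φ (single a b 1)) μ :=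
    (hf a b).mul_const _
  simp only [map_eq_sum_apply_mul_map_single φ (f _)]
  rw [map_eq_sum_apply_mul_map_single,
    integral_finsetSum _ fun a _ ↦ integrable_finsetSum _ fun b _ ↦ hterm a b]
  refine Finset.sum_congr rfl fun a _ ↦ ?_
  rw [integral_finsetSum _ fun b _ ↦ hterm a b]
  simp only [integral_mul_const, of_apply]

end EntrywiseIntegral

section Twirl

variable {ι : Type*} [Fintype ι] [DecidableEq ι]

/-- The twirl `∫ (V ⊗ V) M (V ⊗ V)† dμ(V)` of a matrix on `ℂ^ι ⊗ ℂ^ι`, integrated entrywise. -/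
def twirl (μ : Measure (unitaryGroup ι ℂ)) (M : Matrix (ι × ι) (ι × ι) ℂ) :
    Matrix (ι × ι) (ι × ι) ℂ :=
  of fun a b ↦ ∫ V : unitaryGroup ι ℂ, ((V.1 ⊗ₖ V.1) * M * (V.1 ⊗ₖ V.1)ᴴ) a b ∂μ

variable (μ : Measure (unitaryGroup ι ℂ)) (M : Matrix (ι × ι) (ι × ι) ℂ)

theorem integrable_kronecker_self_conj_apply [IsFiniteMeasure μ] (a b : ι × ι) :
    Integrable (fun V : unitaryGroup ι ℂ ↦ ((V.1 ⊗ₖ V.1) * M * (V.1 ⊗ₖ V.1)ᴴ) a b) μ := by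
  have := borelSpace_unitaryGroup (ι := ι)
  have := compactSpace_unitaryGroup (ι := ι)
  have hcont : Continuous fun V : unitaryGroup ι ℂ ↦ V.1 ⊗ₖ V.1 :=
    continuous_matrix fun i j ↦ (continuous_subtype_val.matrix_elem i.1 j.1).mul
      (continuous_subtype_val.matrix_elem i.2 j.2)
  exact (((hcont.matrix_mul continuous_const).matrix_mul
    hcont.matrix_conjTranspose).matrix_elem a b).integrable_of_hasCompactSupport
      (.of_compactSpace _)

theorem map_twirl [IsFiniteMeasure μ] (φ : Matrix (ι × ι) (ι × ι) ℂ →ₗ[ℂ] ℂ) :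
    φ (twirl μ M) = ∫ V : unitaryGroup ι ℂ, φ ((V.1 ⊗ₖ V.1) * M * (V.1 ⊗ₖ V.1)ᴴ) ∂μ :=
  map_of_integral (integrable_kronecker_self_conj_apply μ M) φ

theorem kronecker_self_conj_twirl [IsFiniteMeasure μ] [μ.IsMulLeftInvariant]
    (W : unitaryGroup ι ℂ) :
    (W.1 ⊗ₖ W.1) * twirl μ M * (W.1 ⊗ₖ W.1)ᴴ = twirl μ M := by
  have := borelSpace_unitaryGroup (ι := ι)
  ext a b
  calc ((W.1 ⊗ₖ W.1) * twirl μ M * (W.1 ⊗ₖ W.1)ᴴ) a b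
      = ∫ V : unitaryGroup ι ℂ,
          ((W.1 ⊗ₖ W.1) * ((V.1 ⊗ₖ V.1) * M * (V.1 ⊗ₖ V.1)ᴴ) * (W.1 ⊗ₖ W.1)ᴴ) a b ∂μ :=
        map_twirl μ M (entryLinearMap ℂ ℂ a b ∘ₗ
          LinearMap.mulLeftRight ℂ (W.1 ⊗ₖ W.1, (W.1 ⊗ₖ W.1)ᴴ))
    _ = ∫ V : unitaryGroup ι ℂ,
          (((W * V).1 ⊗ₖ (W * V).1) * M * ((W * V).1 ⊗ₖ (W * V).1)ᴴ) a b ∂μ := by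
        simp only [Submonoid.coe_mul, mul_kronecker_mul, conjTranspose_mul, Matrix.mul_assoc]
    _ = twirl μ M a b :=
        integral_mul_left_eq_self
          (fun V : unitaryGroup ι ℂ ↦ ((V.1 ⊗ₖ V.1) * M * (V.1 ⊗ₖ V.1)ᴴ) a b) W

theorem conjTranspose_kronecker_self_mul_kronecker_self (W : unitaryGroup ι ℂ) :
    (W.1 ⊗ₖ W.1)ᴴ * (W.1 ⊗ₖ W.1) = 1 :=
  mem_unitaryGroup_iff'.mp (kronecker_mem_unitary W.2 W.2)

theorem commute_twirl_kronecker_self [IsFiniteMeasure μ] [μ.IsMulLeftInvariant]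
    (W : unitaryGroup ι ℂ) : Commute (twirl μ M) (W.1 ⊗ₖ W.1) := by
  have h : twirl μ M * (W.1 ⊗ₖ W.1) = (W.1 ⊗ₖ W.1) * twirl μ M := by
    rw [← kronecker_self_conj_twirl μ M W, Matrix.mul_assoc _ _ (W.1 ⊗ₖ W.1),
      conjTranspose_kronecker_self_mul_kronecker_self, Matrix.mul_one,
      kronecker_self_conj_twirl]
  exact h

theorem trace_twirl_mul_of_commute [IsProbabilityMeasure μ] {K : Matrix (ι × ι) (ι × ι) ℂ}
    (hK : ∀ W : unitaryGroup ι ℂ, Commute K (W.1 ⊗ₖ W.1)) :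
    (twirl μ M * K).trace = (M * K).trace := by
  have hconj (V : unitaryGroup ι ℂ) :
      ((V.1 ⊗ₖ V.1) * M * (V.1 ⊗ₖ V.1)ᴴ * K).trace = (M * K).trace := by
    rw [Matrix.mul_assoc, trace_mul_comm, ← Matrix.mul_assoc, Matrix.mul_assoc _ K, (hK V).eq,
      ← Matrix.mul_assoc, conjTranspose_kronecker_self_mul_kronecker_self, Matrix.one_mul,
      trace_mul_comm]
  calc (twirl μ M * K).trace
      = ∫ V : unitaryGroup ι ℂ, ((V.1 ⊗ₖ V.1) * M * (V.1 ⊗ₖ V.1)ᴴ * K).trace ∂μ :=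
        map_twirl μ M (traceLinearMap (ι × ι) ℂ ℂ ∘ₗ LinearMap.mulRight ℂ K)
    _ = (M * K).trace := by simp only [hconj, integral_const, probReal_univ, one_smul]

theorem IsUnitaryTwoDesign.average_eq_twirl {L : ℕ} {U : Fin L → Matrix ι ι ℂ}
    (hU : IsUnitaryTwoDesign U) [IsProbabilityMeasure μ] [μ.IsMulLeftInvariant] :
    (L : ℂ)⁻¹ • ∑ i, (U i ⊗ₖ U i) * M * (U i ⊗ₖ U i)ᴴ = twirl μ M := by
  ext a b
  exact hU.2 μ inferInstance inferInstance M a b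

end Twirl

section StarProjection

variable {ι : Type*}

theorem vecMulVec_star_polarization (x y : ι → ℂ) :
    vecMulVec x (star y) = (1 / 2 : ℂ) • (vecMulVec (x + y) (star (x + y)) +
      Complex.I • vecMulVec (x + Complex.I • y) (star (x + Complex.I • y)) -
      (1 + Complex.I) • (vecMulVec x (star x) + vecMulVec y (star y))) := by
  ext a b
  simp only [Matrix.smul_apply, Matrix.sub_apply, Matrix.add_apply, vecMulVec_apply, star_add,
    star_smul, Pi.add_apply, Pi.smul_apply, smul_eq_mul, Complex.star_def, Complex.conj_I]
  linear_combination
    (1 / 2 * (x a * star y b - y a * star x b + Complex.I * y a * star y b)) * Complex.I_sq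

variable [Fintype ι]

theorem isStarProjection_smul_vecMulVec_star {v : ι → ℂ} (hv : v ≠ 0) :
    IsStarProjection ((star v ⬝ᵥ v)⁻¹ • vecMulVec v (star v)) where
  isIdempotentElem := by
    have hne : star v ⬝ᵥ v ≠ 0 := mt dotProduct_star_self_eq_zero.mp hv
    rw [IsIdempotentElem, smul_mul_smul_comm, vecMulVec_mul_vecMulVec, vecMulVec_smul, smul_smul,
      inv_mul_cancel_right₀ hne]
  isSelfAdjoint := by
    rw [isSelfAdjoint_iff, star_smul, star_inv₀, ← star_dotProduct_star, star_star,
      star_eq_conjTranspose, conjTranspose_vecMulVec, star_star]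

theorem vecMulVec_star_self_mem_span_isStarProjection (v : ι → ℂ) :
    vecMulVec v (star v) ∈ Submodule.span ℂ {P : Matrix ι ι ℂ | IsStarProjection P} := by
  rcases eq_or_ne v 0 with rfl | hv
  · simp only [zero_vecMulVec, Submodule.zero_mem]
  · have hne : star v ⬝ᵥ v ≠ 0 := mt dotProduct_star_self_eq_zero.mp hv
    rw [← smul_inv_smul₀ hne (vecMulVec v (star v))]
    exact Submodule.smul_mem _ _ (Submodule.subset_span (isStarProjection_smul_vecMulVec_star hv))

theorem span_isStarProjection_eq_top :
    Submodule.span ℂ {P : Matrix ι ι ℂ | IsStarProjection P} = ⊤ := by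
  classical
  refine Submodule.eq_top_iff'.mpr fun A ↦ ?_
  have hsingle (i j : ι) :
      single i j 1 ∈ Submodule.span ℂ {P : Matrix ι ι ℂ | IsStarProjection P} := by
    have hQ (v : ι → ℂ) := vecMulVec_star_self_mem_span_isStarProjection v
    have hreal : star (Pi.single j 1 : ι → ℂ) = Pi.single j 1 := by
      rw [← Pi.single_star, star_one]
    rw [single_eq_single_vecMulVec_single, ← hreal, vecMulVec_star_polarization]
    exact Submodule.smul_mem _ _ <| Submodule.sub_mem _
      (Submodule.add_mem _ (hQ _) (Submodule.smul_mem _ _ (hQ _)))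
      (Submodule.smul_mem _ _ (Submodule.add_mem _ (hQ _) (hQ _)))
  rw [matrix_eq_sum_single A]
  refine Submodule.sum_mem _ fun i _ ↦ Submodule.sum_mem _ fun j _ ↦ ?_
  simpa only [smul_single, smul_eq_mul, mul_one] using Submodule.smul_mem _ (A i j) (hsingle i j)

end StarProjection

section KroneckerSum

variable {ι R : Type*} [DecidableEq ι] [CommSemiring R]

/-- The Kronecker sum `A ⊗ 1 + 1 ⊗ A`, the infinitesimal version of `V ↦ V ⊗ V`, as a linear map
in `A`. -/
def kroneckerSum : Matrix ι ι R →ₗ[R] Matrix (ι × ι) (ι × ι) R where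
  toFun A := A ⊗ₖ 1 + 1 ⊗ₖ A
  map_add' A B := by rw [add_kronecker, kronecker_add]; abel
  map_smul' c A := by rw [smul_kronecker, kronecker_smul, ← smul_add, RingHom.id_apply]

theorem kroneckerSum_apply (A : Matrix ι ι R) : kroneckerSum A = A ⊗ₖ 1 + 1 ⊗ₖ A :=
  rfl

theorem one_add_smul_kronecker_self (z : R) (A : Matrix ι ι R) :
    (1 + z • A) ⊗ₖ (1 + z • A) = 1 + z • kroneckerSum A + z ^ 2 • (A ⊗ₖ A) := by
  simp only [kroneckerSum_apply, add_kronecker, kronecker_add, smul_kronecker, kronecker_smul,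
    one_kronecker_one, smul_smul, smul_add, sq]
  abel

variable [Fintype ι]

theorem mul_kroneckerSum_single_apply (X : Matrix (ι × ι) (ι × ι) R) (i j a b c d : ι) :
    (X * kroneckerSum (single i j (1 : R))) (a, b) (c, d) =
      (if j = c then X (a, b) (i, d) else 0) + if j = d then X (a, b) (c, i) else 0 := by
  rw [kroneckerSum_apply, Matrix.mul_add, Matrix.add_apply]
  simp [Matrix.mul_apply, Fintype.sum_prod_type, single_apply, Matrix.one_apply, ite_and]

theorem kroneckerSum_single_mul_apply (X : Matrix (ι × ι) (ι × ι) R) (i j a b c d : ι) :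
    (kroneckerSum (single i j (1 : R)) * X) (a, b) (c, d) =
      (if i = a then X (j, b) (c, d) else 0) + if i = b then X (a, j) (c, d) else 0 := by
  rw [kroneckerSum_apply, Matrix.add_mul, Matrix.add_apply]
  simp [Matrix.mul_apply, Fintype.sum_prod_type, single_apply, Matrix.one_apply, ite_and]

theorem one_add_smul_mem_unitaryGroup_of_isStarProjection {P : Matrix ι ι ℂ}
    (hP : IsStarProjection P) {z : ℂ} (hz : z + star z + z * star z = 0) :
    1 + z • P ∈ unitaryGroup ι ℂ := by
  rw [mem_unitaryGroup_iff, star_add, star_smul, star_one, hP.isSelfAdjoint.star_eq]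
  have hPP : P * P = P := hP.isIdempotentElem
  calc (1 + z • P) * (1 + star z • P) = 1 + (z + star z + z * star z) • P := by
        simp only [add_mul, mul_add, one_mul, mul_one, smul_mul_smul_comm, hPP, add_smul]
        abel
    _ = 1 := by rw [hz, zero_smul, add_zero]

theorem kroneckerSum_mem_span_range_kronecker_self (A : Matrix ι ι ℂ) :
    kroneckerSum A ∈ Submodule.span ℂ (Set.range fun W : unitaryGroup ι ℂ ↦ W.1 ⊗ₖ W.1) := by
  set S := Submodule.span ℂ (Set.range fun W : unitaryGroup ι ℂ ↦ W.1 ⊗ₖ W.1)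
  suffices h :
      Submodule.span ℂ {P : Matrix ι ι ℂ | IsStarProjection P} ≤ S.comap kroneckerSum from
    h (span_isStarProjection_eq_top (ι := ι) ▸ Submodule.mem_top)
  refine Submodule.span_le.mpr fun P hP ↦ ?_
  have hmem {z : ℂ} (hz : z + star z + z * star z = 0) :
      1 + z • kroneckerSum P + z ^ 2 • (P ⊗ₖ P) ∈ S := by
    rw [← one_add_smul_kronecker_self]
    exact Submodule.subset_span
      ⟨⟨_, one_add_smul_mem_unitaryGroup_of_isStarProjection hP hz⟩, rfl⟩
  have h₀ := hmem (z := 0) (by simp)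
  have h₁ := hmem (z := Complex.I - 1) (by
    simp only [star_sub, star_one, Complex.star_def, Complex.conj_I]
    linear_combination -Complex.I_sq)
  have h₂ := hmem (z := -2) (by
    simp only [star_neg, star_ofNat]
    norm_num)
  -- The coefficients eliminate `1` and `P ⊗ P`.
  have hcomb := S.sub_mem (S.smul_mem ((2 + Complex.I) / 2) h₀)
    (S.add_mem h₁ (S.smul_mem (Complex.I / 2) h₂))
  refine Eq.subst (motive := fun K ↦ K ∈ S) ?_ hcomb
  rw [sub_sq, Complex.I_sq]
  match_scalars <;> ring

end KroneckerSum

section TensorFlip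

variable {ι R : Type*} [DecidableEq ι] [CommSemiring R]

variable (ι R) in
/-- The flip operator `x ⊗ y ↦ y ⊗ x`. -/
def tensorFlip : Matrix (ι × ι) (ι × ι) R :=
  Equiv.Perm.permMatrix R (Equiv.prodComm ι ι)

theorem tensorFlip_apply (a b c d : ι) :
    tensorFlip ι R (a, b) (c, d) = if a = d ∧ b = c then 1 else 0 := by
  simp [tensorFlip, PEquiv.toMatrix_apply, Prod.ext_iff, and_comm]

variable [Fintype ι]

theorem tensorFlip_mul_apply (X : Matrix (ι × ι) (ι × ι) R) (a b c d : ι) :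
    (tensorFlip ι R * X) (a, b) (c, d) = X (b, a) (c, d) := by
  rw [tensorFlip, PEquiv.toMatrix_toPEquiv_mul]
  rfl

theorem mul_tensorFlip_apply (X : Matrix (ι × ι) (ι × ι) R) (a b c d : ι) :
    (X * tensorFlip ι R) (a, b) (c, d) = X (a, b) (d, c) := by
  rw [tensorFlip, PEquiv.mul_toMatrix_toPEquiv]
  rfl

theorem tensorFlip_mul_self : tensorFlip ι R * tensorFlip ι R = 1 := by
  ext ⟨a, b⟩ ⟨c, d⟩
  rw [tensorFlip_mul_apply, tensorFlip_apply]
  simp only [Matrix.one_apply, Prod.mk.injEq, and_comm]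

theorem commute_tensorFlip_kronecker_self (A : Matrix ι ι R) :
    Commute (tensorFlip ι R) (A ⊗ₖ A) := by
  ext ⟨a, b⟩ ⟨c, d⟩
  rw [tensorFlip_mul_apply, mul_tensorFlip_apply, kronecker_apply, kronecker_apply, mul_comm]

theorem trace_kronecker_mul_tensorFlip (A B : Matrix ι ι R) :
    ((A ⊗ₖ B) * tensorFlip ι R).trace = (A * B).trace := by
  simp only [trace, diag_apply, Fintype.sum_prod_type, mul_tensorFlip_apply, kronecker_apply]
  simp only [Matrix.mul_apply]

theorem trace_tensorFlip : (tensorFlip ι R).trace = Fintype.card ι := by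
  simpa only [one_kronecker_one, Matrix.one_mul, trace_one] using
    trace_kronecker_mul_tensorFlip (1 : Matrix ι ι R) 1

theorem trace_smul_one_add_smul_tensorFlip (a b : R) :
    (a • 1 + b • tensorFlip ι R).trace = Fintype.card ι * (a * Fintype.card ι + b) := by
  rw [trace_add, trace_smul, trace_smul, trace_one, trace_tensorFlip, Fintype.card_prod]
  push_cast [smul_eq_mul]
  ring

theorem trace_smul_one_add_smul_tensorFlip_mul_tensorFlip (a b : R) :
    ((a • 1 + b • tensorFlip ι R) * tensorFlip ι R).trace =
      Fintype.card ι * (a + b * Fintype.card ι) := by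
  rw [Matrix.add_mul, smul_mul, smul_mul, Matrix.one_mul, tensorFlip_mul_self, add_comm,
    trace_smul_one_add_smul_tensorFlip, add_comm a]

end TensorFlip

section PartialTrace

variable {α β : Type*} [Fintype β]

theorem ptraceRight_mul_kronecker_one [Fintype α] [DecidableEq β]
    (X : Matrix (α × β) (α × β) ℂ) (A : Matrix α α ℂ) :
    ptraceRight (X * (A ⊗ₖ 1)) = ptraceRight X * A := by
  ext i j
  simp only [ptraceRight, of_apply, Matrix.mul_apply, Fintype.sum_prod_type, kronecker_apply,
    Matrix.one_apply, mul_ite, mul_one, mul_zero, Finset.sum_ite_eq', Finset.mem_univ, if_true,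
    Finset.sum_mul]
  exact Finset.sum_comm

theorem ptraceRight_kronecker_one_mul [Fintype α] [DecidableEq β]
    (A : Matrix α α ℂ) (X : Matrix (α × β) (α × β) ℂ) :
    ptraceRight ((A ⊗ₖ 1) * X) = A * ptraceRight X := by
  ext i j
  simp only [ptraceRight, of_apply, Matrix.mul_apply, Fintype.sum_prod_type, kronecker_apply,
    Matrix.one_apply, mul_ite, ite_mul, mul_one, mul_zero, zero_mul, Finset.sum_ite_eq,
    Finset.mem_univ, if_true, Finset.mul_sum]
  exact Finset.sum_comm

theorem ptraceRight_mul_one_kronecker [Fintype α] [DecidableEq α]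
    (X : Matrix (α × β) (α × β) ℂ) (B : Matrix β β ℂ) :
    ptraceRight (X * (1 ⊗ₖ B)) = ptraceRight ((1 ⊗ₖ B) * X) := by
  ext i j
  simp only [ptraceRight, of_apply, Matrix.mul_apply, Fintype.sum_prod_type, kronecker_apply,
    Matrix.one_apply, ite_mul, mul_ite, one_mul, zero_mul, mul_zero, Finset.sum_ite_irrel,
    Finset.sum_const_zero, Finset.sum_ite_eq, Finset.sum_ite_eq', Finset.mem_univ, if_true]
  rw [Finset.sum_comm]
  simp only [mul_comm]

theorem ptraceRight_add (X Y : Matrix (α × β) (α × β) ℂ) :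
    ptraceRight (X + Y) = ptraceRight X + ptraceRight Y := by
  ext i j
  simp only [ptraceRight, of_apply, Matrix.add_apply, Finset.sum_add_distrib]

theorem ptraceRight_one [DecidableEq α] [DecidableEq β] :
    ptraceRight (1 : Matrix (α × β) (α × β) ℂ) = (Fintype.card β : ℂ) • 1 := by
  ext i j
  simp [ptraceRight, Matrix.one_apply]

end PartialTrace

section Commutant

variable {ι : Type*} [Fintype ι] [DecidableEq ι] {X : Matrix (ι × ι) (ι × ι) ℂ}

theorem commute_kroneckerSum_of_commute_kronecker_self
    (hX : ∀ W : unitaryGroup ι ℂ, Commute X (W.1 ⊗ₖ W.1)) (A : Matrix ι ι ℂ) :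
    Commute X (kroneckerSum A) := by
  have hspan : Submodule.span ℂ (Set.range fun W : unitaryGroup ι ℂ ↦ W.1 ⊗ₖ W.1) ≤
      (Subalgebra.centralizer ℂ {X}).toSubmodule := by
    rw [Submodule.span_le]
    rintro _ ⟨W, rfl⟩ _ rfl
    exact hX W
  exact hspan (kroneckerSum_mem_span_range_kronecker_self A) X rfl

theorem eq_trace_smul_one_of_subsingleton {κ R : Type*} [Fintype κ] [DecidableEq κ]
    [Subsingleton κ] [Semiring R] (Y : Matrix κ κ R) : Y = Y.trace • 1 := by
  ext p q
  obtain rfl := Subsingleton.elim p q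
  rw [trace, Fintype.sum_subsingleton _ p, diag_apply, Matrix.smul_apply, one_apply_eq,
    smul_eq_mul, mul_one]

theorem exists_ptraceRight_eq_smul_one (hX : ∀ A : Matrix ι ι ℂ, Commute X (kroneckerSum A)) :
    ∃ c : ℂ, ptraceRight X = c • 1 := by
  have hcomm (A : Matrix ι ι ℂ) : Commute A (ptraceRight X) := by
    have h : ptraceRight (X * kroneckerSum A) = ptraceRight (kroneckerSum A * X) :=
      congrArg ptraceRight (hX A).eq
    simp only [kroneckerSum_apply, mul_add, add_mul, ptraceRight_add,
      ptraceRight_mul_kronecker_one, ptraceRight_kronecker_one_mul,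
      ptraceRight_mul_one_kronecker] at h
    exact (add_right_cancel h).symm
  obtain ⟨c, hc⟩ := mem_range_scalar_of_commute_single fun i j _ ↦ hcomm (single i j 1)
  exact ⟨c, by rw [← hc, scalar_apply, smul_one_eq_diagonal]⟩

theorem tensorFlip_mul_add_card_smul (hX : ∀ A : Matrix ι ι ℂ, Commute X (kroneckerSum A)) :
    tensorFlip ι ℂ * X + (Fintype.card ι : ℂ) • X =
      (ptraceRight (X * tensorFlip ι ℂ) ⊗ₖ 1) * tensorFlip ι ℂ + ptraceRight X ⊗ₖ 1 := by
  ext ⟨a, b⟩ ⟨c, d⟩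
  -- Sum the `((a, i), (c, d))` entries of `X * kroneckerSum E = kroneckerSum E * X` over all matrix
  -- units `E = single i b 1`.
  have hentry (i : ι) := congrFun₂ (hX (single i b 1)).eq (a, i) (c, d)
  have hsum := Finset.sum_congr (rfl : (Finset.univ : Finset ι) = _) fun i _ ↦ (hentry i).symm
  simp only [mul_kroneckerSum_single_apply, kroneckerSum_single_mul_apply, Finset.sum_add_distrib,
    Finset.sum_ite_eq', Finset.mem_univ, if_true, Finset.sum_const, Finset.card_univ,
    nsmul_eq_mul, Finset.sum_ite_irrel] at hsum
  rw [Matrix.add_apply, Matrix.add_apply]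
  simpa only [tensorFlip_mul_apply, mul_tensorFlip_apply, kronecker_apply, ptraceRight, of_apply,
    Matrix.one_apply, Matrix.smul_apply, smul_eq_mul, mul_ite, mul_one, mul_zero] using hsum

theorem exists_eq_smul_one_add_smul_tensorFlip
    (hX : ∀ W : unitaryGroup ι ℂ, Commute X (W.1 ⊗ₖ W.1)) :
    ∃ a b : ℂ, X = a • 1 + b • tensorFlip ι ℂ := by
  rcases subsingleton_or_nontrivial ι with _ | _
  · exact ⟨X.trace, 0, by rw [zero_smul, add_zero, ← eq_trace_smul_one_of_subsingleton]⟩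
  have hN : (Fintype.card ι : ℂ) ^ 2 - 1 ≠ 0 :=
    sub_ne_zero.mpr (mod_cast (Nat.one_lt_pow two_ne_zero Fintype.one_lt_card).ne')
  set F := tensorFlip ι ℂ
  set N := (Fintype.card ι : ℂ)
  have hXsum := commute_kroneckerSum_of_commute_kronecker_self hX
  have hXFsum := commute_kroneckerSum_of_commute_kronecker_self fun W ↦
    (hX W).mul_left (commute_tensorFlip_kronecker_self W.1)
  obtain ⟨p, hp⟩ := exists_ptraceRight_eq_smul_one hXsum
  obtain ⟨r, hr⟩ := exists_ptraceRight_eq_smul_one hXFsum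
  have hFX : F * X + N • X = r • F + p • 1 := by
    rw [tensorFlip_mul_add_card_smul hXsum, hp, hr]
    simp only [smul_kronecker, one_kronecker_one, smul_mul, Matrix.one_mul]
    rfl
  have hX' : X + N • (F * X) = r • 1 + p • F := by
    simpa only [mul_add, mul_smul_comm, ← Matrix.mul_assoc, F, tensorFlip_mul_self, Matrix.one_mul,
      Matrix.mul_one] using congrArg (F * ·) hFX
  have hinv : (N ^ 2 - 1) • X = (N * p - r) • 1 + (N * r - p) • F := by
    linear_combination (norm := module) N • hFX - hX'
  refine ⟨(N * p - r) / (N ^ 2 - 1), (N * r - p) / (N ^ 2 - 1), ?_⟩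
  rw [← smul_right_inj hN, hinv, smul_add, smul_smul, smul_smul, mul_div_cancel₀ _ hN,
    mul_div_cancel₀ _ hN]

end Commutant

section PartialFlip

variable {α β : Type*} [DecidableEq α] [DecidableEq β]

variable (α β) in
/-- The flip of the two copies of `ℂ^α` in `(ℂ^α ⊗ ℂ^β) ⊗ (ℂ^α ⊗ ℂ^β)`. -/
def partialFlip : Matrix ((α × β) × (α × β)) ((α × β) × (α × β)) ℂ :=
  (tensorFlip α ℂ ⊗ₖ (1 : Matrix (β × β) (β × β) ℂ)).submatrix
    (Equiv.prodProdProdComm α β α β) (Equiv.prodProdProdComm α β α β)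

variable [Fintype α] [Fintype β]

theorem mul_partialFlip_apply (X : Matrix ((α × β) × (α × β)) ((α × β) × (α × β)) ℂ)
    (p : (α × β) × (α × β)) (a a' : α) (b b' : β) :
    (X * partialFlip α β) p ((a, b), (a', b')) = X p ((a', b), (a, b')) := by
  simp [partialFlip, Matrix.mul_apply, tensorFlip_apply, Fintype.sum_prod_type, Matrix.one_apply,
    ite_and]

theorem trace_mul_partialFlip (X : Matrix ((α × β) × (α × β)) ((α × β) × (α × β)) ℂ) :
    (X * partialFlip α β).trace =
      ∑ a, ∑ b, ∑ a', ∑ b', X ((a, b), (a', b')) ((a', b), (a, b')) := by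
  simp only [trace, diag_apply, Fintype.sum_prod_type, mul_partialFlip_apply]

theorem trace_kronecker_mul_partialFlip (Y Z : Matrix (α × β) (α × β) ℂ) :
    ((Y ⊗ₖ Z) * partialFlip α β).trace = (ptraceRight Y * ptraceRight Z).trace := by
  rw [trace_mul_partialFlip]
  simp only [kronecker_apply, trace, diag_apply, Matrix.mul_apply, ptraceRight, of_apply,
    Finset.sum_mul_sum]
  exact Finset.sum_congr rfl fun a _ ↦ Finset.sum_comm

theorem trace_partialFlip :
    (partialFlip α β).trace = Fintype.card α * Fintype.card β ^ 2 := by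
  have h := trace_kronecker_mul_partialFlip (1 : Matrix (α × β) (α × β) ℂ) 1
  rw [one_kronecker_one, Matrix.one_mul, ptraceRight_one, smul_mul_smul_comm, Matrix.one_mul,
    trace_smul, trace_one, smul_eq_mul] at h
  rw [h]
  ring

theorem trace_tensorFlip_mul_partialFlip :
    (tensorFlip (α × β) ℂ * partialFlip α β).trace = Fintype.card α ^ 2 * Fintype.card β := by
  have hflip (a a' : α) (b b' : β) :
      tensorFlip (α × β) ℂ ((a, b), (a', b')) ((a', b), (a, b')) = if b = b' then 1 else 0 := by
    simp only [tensorFlip_apply, Prod.mk.injEq, true_and, and_iff_left_of_imp Eq.symm]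
  simp only [trace_mul_partialFlip, hflip, Finset.sum_ite_eq, Finset.mem_univ, if_true,
    Finset.sum_const, Finset.card_univ, nsmul_eq_mul, mul_one]
  ring

theorem trace_smul_one_add_smul_tensorFlip_mul_partialFlip (a b : ℂ) :
    ((a • 1 + b • tensorFlip (α × β) ℂ) * partialFlip α β).trace =
      Fintype.card α * Fintype.card β * (a * Fintype.card β + b * Fintype.card α) := by
  rw [Matrix.add_mul, smul_mul, smul_mul, Matrix.one_mul, trace_add, trace_smul, trace_smul,
    trace_partialFlip, trace_tensorFlip_mul_partialFlip, smul_eq_mul, smul_eq_mul]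
  ring

end PartialFlip

section Hermitian

variable {α : Type*} [Fintype α]

theorem re_trace_sq_of_isHermitian {ρ : Matrix α α ℂ} (hρ : ρ.IsHermitian) :
    (ρ.trace ^ 2).re = ρ.trace.re ^ 2 := by
  have him : ρ.trace.im = 0 := by
    rw [← Complex.conj_eq_iff_im, ← Complex.star_def, ← trace_conjTranspose, hρ.eq]
  rw [sq, Complex.mul_re, him, mul_zero, sub_zero, sq]

theorem re_trace_mul_self_nonneg_of_isHermitian {ρ : Matrix α α ℂ} (hρ : ρ.IsHermitian) :
    0 ≤ (ρ * ρ).trace.re := by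
  have h := (posSemidef_conjTranspose_mul_self ρ).trace_nonneg
  rw [hρ.eq] at h
  exact (Complex.nonneg_iff.mp h).1

end Hermitian

section Extractor

theorem mul_add_mul_nonneg_of_mul_mul_add_nonneg {m n a b : ℝ} (hm : 1 ≤ m) (hn : 1 ≤ n)
    (hab : 0 ≤ a * (m * n) + b) (hba : 0 ≤ a + b * (m * n)) : 0 ≤ a * m + b * n := by
  rcases hm.eq_or_lt with rfl | hm'
  · simpa only [one_mul, mul_one] using hba
  · have hmn : 0 < (m * n) ^ 2 - 1 :=
      sub_pos.mpr <| one_lt_pow₀ (hm'.trans_le (le_mul_of_one_le_right (by linarith) hn))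
        two_ne_zero
    refine nonneg_of_mul_nonneg_right ?_ hmn
    calc 0 ≤ (a * (m * n) + b) * (n * (m ^ 2 - 1)) + (a + b * (m * n)) * (m * (n ^ 2 - 1)) :=
          add_nonneg (mul_nonneg hab (mul_nonneg (by linarith) (by nlinarith)))
            (mul_nonneg hba (mul_nonneg (by linarith) (by nlinarith)))
      _ = ((m * n) ^ 2 - 1) * (a * m + b * n) := by ring

variable {α β : Type*} [Fintype α] [Fintype β] [DecidableEq α] [DecidableEq β]

theorem re_trace_mul_partialFlip_le [Nonempty α] [Nonempty β]
    {X : Matrix ((α × β) × (α × β)) ((α × β) × (α × β)) ℂ}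
    (hX : ∀ W : unitaryGroup (α × β) ℂ, Commute X (W.1 ⊗ₖ W.1))
    (htr : 0 ≤ X.trace.re) (hflip : 0 ≤ (X * tensorFlip (α × β) ℂ).trace.re) :
    (X * partialFlip α β).trace.re ≤
      X.trace.re / Fintype.card α + (X * tensorFlip (α × β) ℂ).trace.re / Fintype.card β := by
  obtain ⟨a, b, rfl⟩ := exists_eq_smul_one_add_smul_tensorFlip hX
  set m := Fintype.card α
  set n := Fintype.card β
  have hm₁ : (1 : ℝ) ≤ m := Nat.one_le_cast.mpr Fintype.card_pos
  have hn₁ : (1 : ℝ) ≤ n := Nat.one_le_cast.mpr Fintype.card_pos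
  have htr_eq : (a • 1 + b • tensorFlip (α × β) ℂ).trace.re =
      m * n * (a.re * (m * n) + b.re) := by
    rw [trace_smul_one_add_smul_tensorFlip]
    simp [m, n]
  have hflip_eq : ((a • 1 + b • tensorFlip (α × β) ℂ) * tensorFlip (α × β) ℂ).trace.re =
      m * n * (a.re + b.re * (m * n)) := by
    rw [trace_smul_one_add_smul_tensorFlip_mul_tensorFlip]
    simp [m, n]
  have hpartial_eq : ((a • 1 + b • tensorFlip (α × β) ℂ) * partialFlip α β).trace.re =
      m * n * (a.re * n + b.re * m) := by
    rw [trace_smul_one_add_smul_tensorFlip_mul_partialFlip]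
    simp [m, n]
  rw [htr_eq] at htr ⊢
  rw [hflip_eq] at hflip ⊢
  rw [hpartial_eq]
  have hmn : (0 : ℝ) < m * n := by positivity
  have hgap := mul_add_mul_nonneg_of_mul_mul_add_nonneg hm₁ hn₁
    (nonneg_of_mul_nonneg_right htr hmn) (nonneg_of_mul_nonneg_right hflip hmn)
  calc (m : ℝ) * n * (a.re * n + b.re * m)
      ≤ m * n * (a.re * n + b.re * m) + (a.re * m + b.re * n) := le_add_of_nonneg_right hgap
    _ = m * n * (a.re * (m * n) + b.re) / m + m * n * (a.re + b.re * (m * n)) / n := by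
        field_simp
        ring

theorem IsUnitaryTwoDesign.average_trace_ptraceRight_mul_self {L : ℕ}
    {U : Fin L → Matrix (α × β) (α × β) ℂ} (hU : IsUnitaryTwoDesign U)
    (μ : Measure (unitaryGroup (α × β) ℂ)) [IsProbabilityMeasure μ] [μ.IsMulLeftInvariant]
    (ρ : Matrix (α × β) (α × β) ℂ) :
    (L : ℂ)⁻¹ * ∑ i, (ptraceRight (U i * ρ * (U i)ᴴ) * ptraceRight (U i * ρ * (U i)ᴴ)).trace =
      (twirl μ (ρ ⊗ₖ ρ) * partialFlip α β).trace := by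
  rw [← hU.average_eq_twirl μ, smul_mul, trace_smul, Finset.sum_mul, trace_sum, smul_eq_mul]
  simp only [conjTranspose_kronecker, ← mul_kronecker_mul, trace_kronecker_mul_partialFlip]

theorem trace_twirl_kronecker_self (μ : Measure (unitaryGroup α ℂ)) [IsProbabilityMeasure μ]
    (ρ : Matrix α α ℂ) : (twirl μ (ρ ⊗ₖ ρ)).trace = ρ.trace ^ 2 := by
  rw [← Matrix.mul_one (twirl _ _), trace_twirl_mul_of_commute μ _ fun _ ↦ .one_left _,
    Matrix.mul_one, trace_kronecker, sq]

theorem trace_twirl_kronecker_self_mul_tensorFlip (μ : Measure (unitaryGroup α ℂ))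
    [IsProbabilityMeasure μ] (ρ : Matrix α α ℂ) :
    (twirl μ (ρ ⊗ₖ ρ) * tensorFlip α ℂ).trace = (ρ * ρ).trace := by
  rw [trace_twirl_mul_of_commute μ _ fun W ↦ commute_tensorFlip_kronecker_self W.1,
    trace_kronecker_mul_tensorFlip]

theorem two_design_renyi2_extractor_general [Nonempty α] [Nonempty β] {L : ℕ}
    {U : Fin L → Matrix (α × β) (α × β) ℂ} (hU : IsUnitaryTwoDesign U)
    {ρ : Matrix (α × β) (α × β) ℂ} (hρ : ρ.IsHermitian) :
    (1 / (L : ℝ)) *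
        ∑ i, (ptraceRight (U i * ρ * (U i)ᴴ) * ptraceRight (U i * ρ * (U i)ᴴ)).trace.re ≤
      ρ.trace.re ^ 2 / Fintype.card α +
        (Fintype.card α / (Fintype.card α * Fintype.card β)) * (ρ * ρ).trace.re := by
  obtain ⟨μ, _, _⟩ := exists_isProbabilityMeasure_isMulLeftInvariant_unitaryGroup (α × β)
  have hα : (Fintype.card α : ℝ) ≠ 0 := Nat.cast_ne_zero.mpr Fintype.card_ne_zero
  have htrace : (twirl μ (ρ ⊗ₖ ρ)).trace.re = ρ.trace.re ^ 2 := by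
    rw [trace_twirl_kronecker_self, re_trace_sq_of_isHermitian hρ]
  have hflip := congrArg Complex.re (trace_twirl_kronecker_self_mul_tensorFlip μ ρ)
  calc (1 / (L : ℝ)) *
        ∑ i, (ptraceRight (U i * ρ * (U i)ᴴ) * ptraceRight (U i * ρ * (U i)ᴴ)).trace.re
      = (twirl μ (ρ ⊗ₖ ρ) * partialFlip α β).trace.re := by
        rw [← hU.average_trace_ptraceRight_mul_self, ← Complex.ofReal_natCast,
          ← Complex.ofReal_inv, Complex.re_ofReal_mul, Complex.re_sum, one_div]
    _ ≤ (twirl μ (ρ ⊗ₖ ρ)).trace.re / Fintype.card α +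
          (twirl μ (ρ ⊗ₖ ρ) * tensorFlip (α × β) ℂ).trace.re / Fintype.card β :=
        re_trace_mul_partialFlip_le (commute_twirl_kronecker_self μ _)
          (htrace ▸ sq_nonneg _) (hflip ▸ re_trace_mul_self_nonneg_of_isHermitian hρ)
    _ = ρ.trace.re ^ 2 / Fintype.card α +
        (Fintype.card α / (Fintype.card α * Fintype.card β)) * (ρ * ρ).trace.re := by
        rw [htrace, hflip, div_mul_cancel_left₀ hα, inv_mul_eq_div]

end Extractor

/-- **Unitary 2-designs are quantum Rényi 2-extractors**: for every positive semidefinite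
`ρ` on `ℂ^N = ℂ^M ⊗ ℂ^{M'}`,
`(1/L) Σ_i Tr[(Tr_{M'}[U_i ρ U_i†])²] ≤ (Tr ρ)²/M + (M/N)·Tr[ρ²]`. -/
theorem two_design_renyi2_extractor
    (dM dM' : ℕ) (hM : 1 ≤ dM) (hM' : 1 ≤ dM')
    (L : ℕ) (hL : 1 ≤ L)
    (U : Fin L → Matrix (Fin dM × Fin dM') (Fin dM × Fin dM') ℂ)
    (hU : IsUnitaryTwoDesign U)
    (ρ : Matrix (Fin dM × Fin dM') (Fin dM × Fin dM') ℂ) (hρ : ρ.PosSemidef) :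
    (1 / (L : ℝ)) *
        ∑ i, (Matrix.trace (ptraceRight (U i * ρ * (U i)ᴴ) *
          ptraceRight (U i * ρ * (U i)ᴴ))).re ≤
      (ρ.trace.re) ^ 2 / (dM : ℝ) +
        ((dM : ℝ) / ((dM : ℝ) * (dM' : ℝ))) * (Matrix.trace (ρ * ρ)).re := by
  have : Nonempty (Fin dM) := Fin.pos_iff_nonempty.mp hM
  have : Nonempty (Fin dM') := Fin.pos_iff_nonempty.mp hM'
  simpa only [Fintype.card_fin] using two_design_renyi2_extractor_general hU hρ.isHermitian
end
end

section
/- The conditional Rényi 2-entropy is upper bounded by the conditional von Neumann entropy: for every state ρ_AB on H_A ⊗ H_B, H₂(A|B)_ρ ≤ H(A|B)_ρ; i.e., −log Tr[ρ_AB (1_A ⊗ ρ_B^{-1/2}) ρ_AB (1_A ⊗ ρ_B^{-1/2})] ≤ H(ρ_AB) − H(ρ_B), where ρ_B = Tr_A[ρ_AB]. -/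
open scoped Kronecker ComplexOrder
open Matrix

noncomputable section

/-- Conditional Rényi 2-entropy `H₂(A|B)_ρ` (base-2 logarithm), conditioning on the right
tensor factor. -/
def condH2 {α β : Type*} [Fintype α] [Fintype β] [DecidableEq α] [DecidableEq β]
    (ρ : Matrix (α × β) (α × β) ℂ) : ℝ :=
  - Real.logb 2
      (Matrix.trace (ρ * ((1 : Matrix α α ℂ) ⊗ₖ invSqrt (ptraceLeft ρ)) * ρ *
        ((1 : Matrix α α ℂ) ⊗ₖ invSqrt (ptraceLeft ρ)))).re

/-- Von Neumann entropy (base-2 logarithm) of a Hermitian matrix, computed from its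
eigenvalues (junk value `0` for non-Hermitian matrices); `0 · log 0 = 0`. -/
def vNEntropy {n : Type*} [Fintype n] [DecidableEq n] (A : Matrix n n ℂ) : ℝ :=
  if hA : A.IsHermitian then -∑ i, hA.eigenvalues i * Real.logb 2 (hA.eigenvalues i) else 0

/-!
Let `σ` be positive semidefinite with `ker σ ⊆ ker ρ`, and let `ρ = ∑ pᵢ |vᵢ⟩⟨vᵢ|` and
`T = σ^{-1/2}`. Since `ρ ≥ pᵢ |vᵢ⟩⟨vᵢ|`,
`Tr[ρTρT] = ∑ pᵢ ⟨vᵢ|TρT|vᵢ⟩ ≥ ∑ pᵢ · pᵢ ⟨vᵢ|T|vᵢ⟩²`.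
Concavity of the logarithm bounds the logarithm of the right-hand side below by
`∑ pᵢ (log pᵢ + 2 log ⟨vᵢ|T|vᵢ⟩)`. A second use of concavity, now for the distribution of a
measurement of `σ` in the state `vᵢ`, gives `2 log ⟨vᵢ|T|vᵢ⟩ ≥ -⟨vᵢ|log σ|vᵢ⟩`, so that
`log Tr[ρTρT] ≥ Tr[ρ (log ρ - log σ)]`. For `σ = 1 ⊗ ρ_B` the two sides are `-H₂(A|B)` and
`-H(A|B)`.
-/

section Spectral

variable {n 𝕜 : Type*} [RCLike 𝕜] [Fintype n]

/-- The expectation value `⟨v|A|v⟩` of `A` in the vector state `v`; taking the real part makes it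
real-valued for arbitrary `A`. -/
def expVal (A : Matrix n n 𝕜) (v : n → 𝕜) : ℝ :=
  RCLike.re (star v ⬝ᵥ A *ᵥ v)

lemma expVal_one [DecidableEq n] {v : n → 𝕜} (hv : star v ⬝ᵥ v = 1) :
    expVal (1 : Matrix n n 𝕜) v = 1 := by
  simp [expVal, hv]

lemma expVal_conjTranspose_mul_mul {m : Type*} [Fintype m] (A : Matrix m m 𝕜) (B : Matrix m n 𝕜)
    (v : n → 𝕜) : expVal (Bᴴ * A * B) v = expVal A (B *ᵥ v) := by
  simp only [expVal, ← mulVec_mulVec, star_mulVec, dotProduct_mulVec, vecMul_vecMul]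

variable [DecidableEq n] {A : Matrix n n 𝕜}

/-- The Born probability `|⟨u_j|v⟩|²` of the `j`-th eigenvector `u_j` of the observable `A` in the
vector state `v`. -/
def bornWeight (hA : A.IsHermitian) (v : n → 𝕜) (j : n) : ℝ :=
  ‖star (hA.eigenvectorBasis j : n → 𝕜) ⬝ᵥ v‖ ^ 2

lemma bornWeight_nonneg (hA : A.IsHermitian) (v : n → 𝕜) (j : n) : 0 ≤ bornWeight hA v j :=
  sq_nonneg _

lemma cfc_eq_mul_diagonal_mul (hA : A.IsHermitian) (f : ℝ → ℝ) :
    cfc f A = (hA.eigenvectorUnitary : Matrix n n 𝕜) *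
      diagonal (fun j ↦ (f (hA.eigenvalues j) : 𝕜)) *
        (hA.eigenvectorUnitary : Matrix n n 𝕜)ᴴ :=
  hA.cfc_eq f

lemma expVal_cfc (hA : A.IsHermitian) (f : ℝ → ℝ) (v : n → 𝕜) :
    expVal (cfc f A) v = ∑ j, bornWeight hA v j * f (hA.eigenvalues j) := by
  set U := (hA.eigenvectorUnitary : Matrix n n 𝕜)
  have coord (j : n) : (Uᴴ *ᵥ v) j = star (hA.eigenvectorBasis j : n → 𝕜) ⬝ᵥ v := rfl
  have diag : cfc f A = Uᴴᴴ * diagonal (fun j ↦ (f (hA.eigenvalues j) : 𝕜)) * Uᴴ := by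
    rw [conjTranspose_conjTranspose, cfc_eq_mul_diagonal_mul hA]
  rw [diag, expVal_conjTranspose_mul_mul, expVal, dotProduct, map_sum]
  refine Finset.sum_congr rfl fun j _ ↦ ?_
  rw [mulVec_diagonal, Pi.star_apply, coord, mul_left_comm, RCLike.star_def, RCLike.conj_mul,
    bornWeight, mul_comm]
  norm_cast

lemma sum_bornWeight (hA : A.IsHermitian) {v : n → 𝕜} (hv : star v ⬝ᵥ v = 1) :
    ∑ j, bornWeight hA v j = 1 := by
  have h : expVal (cfc (fun _ ↦ (1 : ℝ)) A) v = 1 := by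
    rw [cfc_const_one ℝ A hA.isSelfAdjoint, expVal_one hv]
  simpa only [expVal_cfc hA, mul_one] using h

lemma expVal_eq_sum (hA : A.IsHermitian) (v : n → 𝕜) :
    expVal A v = ∑ j, bornWeight hA v j * hA.eigenvalues j := by
  rw [← expVal_cfc hA (fun x ↦ x), cfc_id' ℝ A hA.isSelfAdjoint]

lemma star_eigenvectorBasis_dotProduct_self (hA : A.IsHermitian) (j : n) :
    star (hA.eigenvectorBasis j : n → 𝕜) ⬝ᵥ hA.eigenvectorBasis j = 1 := by
  rw [dotProduct_comm, ← EuclideanSpace.inner_eq_star_dotProduct, inner_self_eq_norm_sq_to_K]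
  simp

lemma eigenvalues_ne_zero_of_bornWeight_ne_zero (hA : A.IsHermitian) {v : n → 𝕜}
    (hv : ∀ w, A *ᵥ w = 0 → star w ⬝ᵥ v = 0) {j : n} (hj : bornWeight hA v j ≠ 0) :
    hA.eigenvalues j ≠ 0 := by
  contrapose! hj
  have hker : A *ᵥ (hA.eigenvectorBasis j : n → 𝕜) = 0 := by
    rw [hA.mulVec_eigenvectorBasis, hj, zero_smul]
  simp [bornWeight, hv _ hker]

lemma star_dotProduct_eigenvectorBasis_eq_zero (hA : A.IsHermitian) {i : n}
    (hi : hA.eigenvalues i ≠ 0) {w : n → 𝕜} (hw : A *ᵥ w = 0) :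
    star w ⬝ᵥ hA.eigenvectorBasis i = 0 := by
  have h : star w ⬝ᵥ A *ᵥ (hA.eigenvectorBasis i : n → 𝕜) = 0 := by
    have hw_star : star w ᵥ* A = 0 := by rw [← star_eq_zero, star_vecMul, star_star, hA.eq, hw]
    rw [dotProduct_mulVec, hw_star, zero_dotProduct]
  rw [hA.mulVec_eigenvectorBasis, dotProduct_smul] at h
  exact (smul_eq_zero.1 h).resolve_left hi

lemma re_trace_mul_eq_sum (hA : A.IsHermitian) (X : Matrix n n 𝕜) :
    RCLike.re (A * X).trace = ∑ i, hA.eigenvalues i * expVal X (hA.eigenvectorBasis i) := by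
  set U := (hA.eigenvectorUnitary : Matrix n n 𝕜)
  have entry (i : n) : (Uᴴ * X * U) i i =
      star (hA.eigenvectorBasis i : n → 𝕜) ⬝ᵥ X *ᵥ hA.eigenvectorBasis i := by
    rw [Matrix.mul_assoc]
    rfl
  have spec : A = U * diagonal (fun j ↦ (hA.eigenvalues j : 𝕜)) * Uᴴ := hA.spectral_theorem
  have conj : (A * X).trace =
      (diagonal (fun j ↦ (hA.eigenvalues j : 𝕜)) * (Uᴴ * X * U)).trace := by
    conv_lhs => rw [spec, Matrix.mul_assoc, Matrix.mul_assoc, trace_mul_comm]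
    simp only [Matrix.mul_assoc]
  rw [conj]
  simp only [trace, diag_apply, diagonal_mul, entry, map_sum, RCLike.re_ofReal_mul, expVal]

lemma re_trace_cfc (hA : A.IsHermitian) (f : ℝ → ℝ) :
    RCLike.re (cfc f A).trace = ∑ i, f (hA.eigenvalues i) := by
  rw [cfc_eq_mul_diagonal_mul hA, trace_mul_cycle, ← star_eq_conjTranspose,
    Unitary.coe_star_mul_self, Matrix.one_mul, trace_diagonal, map_sum]
  simp only [RCLike.ofReal_re]

lemma re_trace_mul_cfc (hA : A.IsHermitian) (f : ℝ → ℝ) :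
    RCLike.re (A * cfc f A).trace = ∑ i, hA.eigenvalues i * f (hA.eigenvalues i) := by
  have h : A * cfc f A = cfc (fun x ↦ x * f x) A := by
    rw [cfc_mul (fun x ↦ x) f A (hg := finite_real_spectrum.continuousOn f),
      cfc_id' ℝ A hA.isSelfAdjoint]
  rw [h, re_trace_cfc hA]

lemma sum_eigenvalues (hA : A.IsHermitian) : ∑ i, hA.eigenvalues i = RCLike.re A.trace := by
  simp [hA.trace_eq_sum_eigenvalues]

lemma eigenvalues_mul_sq_expVal_le (hA : A.PosSemidef) (X : Matrix n n 𝕜) (i : n) :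
    hA.1.eigenvalues i * expVal X (hA.1.eigenvectorBasis i) ^ 2 ≤
      expVal (Xᴴ * A * X) (hA.1.eigenvectorBasis i) := by
  have h : expVal X (hA.1.eigenvectorBasis i) ^ 2 ≤
      bornWeight hA.1 (X *ᵥ (hA.1.eigenvectorBasis i : n → 𝕜)) i :=
    sq_le_sq' (neg_le_of_abs_le (RCLike.abs_re_le_norm _)) (RCLike.re_le_norm _)
  rw [expVal_conjTranspose_mul_mul, expVal_eq_sum hA.1, mul_comm]
  exact (mul_le_mul_of_nonneg_right h (hA.eigenvalues_nonneg i)).trans <|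
    Finset.single_le_sum (f := fun j ↦ bornWeight hA.1 _ j * hA.1.eigenvalues j)
      (fun j _ ↦ mul_nonneg (bornWeight_nonneg _ _ j) (hA.eigenvalues_nonneg j)) (Finset.mem_univ i)

end Spectral

section Jensen

lemma concaveOn_logb {b : ℝ} (hb : 1 < b) : ConcaveOn ℝ (Set.Ioi 0) (Real.logb b) := by
  have h := strictConcaveOn_log_Ioi.concaveOn.smul (inv_nonneg.2 (Real.log_pos hb).le)
  exact h.congr fun x _ ↦ (div_eq_inv_mul (Real.log x) (Real.log b)).symm

lemma sum_mul_le_map_sum_of_concaveOn {ι : Type*} [Fintype ι] {s : Set ℝ} {f : ℝ → ℝ}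
    (hf : ConcaveOn ℝ s f) {w x : ι → ℝ} (hw : ∀ i, 0 ≤ w i) (hw1 : ∑ i, w i = 1)
    (hx : ∀ i, w i ≠ 0 → x i ∈ s) :
    ∑ i, w i * x i ∈ s ∧ ∑ i, w i * f (x i) ≤ f (∑ i, w i * x i) := by
  classical
  have drop (g : ι → ℝ) : ∑ i, w i * g i = ∑ i with w i ≠ 0, w i * g i :=
    (Finset.sum_filter_of_ne fun i _ h ↦ left_ne_zero_of_mul h).symm
  have hw1' : ∑ i with w i ≠ 0, w i = 1 := by rwa [Finset.sum_filter_ne_zero]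
  rw [drop, drop]
  exact ⟨hf.1.sum_mem (fun i _ ↦ hw i) hw1' (by simpa using hx),
    hf.le_map_sum (fun i _ ↦ hw i) hw1' (by simpa using hx)⟩

lemma expVal_cfc_comp_le {n 𝕜 : Type*} [RCLike 𝕜] [Fintype n] [DecidableEq n] {A : Matrix n n 𝕜}
    (hA : A.IsHermitian) {s : Set ℝ} {f g : ℝ → ℝ} (hf : ConcaveOn ℝ s f) {v : n → 𝕜}
    (hv : star v ⬝ᵥ v = 1) (hg : ∀ j, bornWeight hA v j ≠ 0 → g (hA.eigenvalues j) ∈ s) :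
    expVal (cfc g A) v ∈ s ∧ expVal (cfc (f ∘ g) A) v ≤ f (expVal (cfc g A) v) := by
  simp only [expVal_cfc hA]
  exact sum_mul_le_map_sum_of_concaveOn hf (bornWeight_nonneg hA v) (sum_bornWeight hA hv) hg

end Jensen

section RelativeEntropy

variable {n : Type*} [Fintype n] [DecidableEq n] {ρ σ : Matrix n n ℂ}

/-- The Umegaki relative entropy `D(ρ‖σ) = Tr[ρ (log ρ - log σ)]` in bits. Since
`Real.logb 2 0 = 0`, this is the usual quantity only if the kernel of `σ` is contained in that of
`ρ`; otherwise the true value is `∞`. -/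
def relEntropy (ρ σ : Matrix n n ℂ) : ℝ :=
  (ρ * (cfc (Real.logb 2) ρ - cfc (Real.logb 2) σ)).trace.re

/-- The collision relative entropy `log Tr[ρ σ^{-1/2} ρ σ^{-1/2}]`, that is, the sandwiched Rényi
divergence of order `2` of a state `ρ` relative to `σ`, in bits. -/
def collisionRelEntropy (ρ σ : Matrix n n ℂ) : ℝ :=
  Real.logb 2 (ρ * invSqrt σ * ρ * invSqrt σ).trace.re

lemma invSqrt_eq_cfc (hσ : σ.IsHermitian) : invSqrt σ = cfc (fun x ↦ √x⁻¹) σ := by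
  rw [invSqrt, dif_pos hσ, cfc_eq_mul_diagonal_mul hσ]
  rfl

lemma isHermitian_invSqrt_s18 (hσ : σ.IsHermitian) : (invSqrt σ).IsHermitian := by
  rw [invSqrt_eq_cfc hσ]
  exact cfc_predicate _ σ

lemma vNEntropy_eq_neg_trace (hρ : ρ.IsHermitian) :
    vNEntropy ρ = -(ρ * cfc (Real.logb 2) ρ).trace.re := by
  rw [vNEntropy, dif_pos hρ, ← re_trace_mul_cfc hρ]
  rfl

lemma expVal_invSqrt_pos_and_le_logb (hσ : σ.PosSemidef) {v : n → ℂ} (hv : star v ⬝ᵥ v = 1)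
    (hker : ∀ w, σ *ᵥ w = 0 → star w ⬝ᵥ v = 0) :
    0 < expVal (invSqrt σ) v ∧
      -expVal (cfc (Real.logb 2) σ) v ≤ 2 * Real.logb 2 (expVal (invSqrt σ) v) := by
  have hpos (j : n) (hj : bornWeight hσ.1 v j ≠ 0) : 0 < √(hσ.1.eigenvalues j)⁻¹ :=
    Real.sqrt_pos.2 <| inv_pos.2 <| (hσ.eigenvalues_nonneg j).lt_of_ne' <|
      eigenvalues_ne_zero_of_bornWeight_ne_zero hσ.1 hker hj
  have hlog (j : n) : 2 * Real.logb 2 √(hσ.1.eigenvalues j)⁻¹ =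
      -Real.logb 2 (hσ.1.eigenvalues j) := by
    rw [Real.logb, Real.log_sqrt (inv_nonneg.2 (hσ.eigenvalues_nonneg j)), Real.log_inv, Real.logb]
    ring
  have hlogExp : -expVal (cfc (Real.logb 2) σ) v =
      2 * expVal (cfc (Real.logb 2 ∘ fun x ↦ √x⁻¹) σ) v := by
    simp only [expVal_cfc hσ.1, Finset.mul_sum, ← Finset.sum_neg_distrib, mul_left_comm (2 : ℝ),
      Function.comp_apply, hlog, mul_neg]
  rw [invSqrt_eq_cfc hσ.1, hlogExp]
  have h := expVal_cfc_comp_le hσ.1 (concaveOn_logb one_lt_two) (g := fun x ↦ √x⁻¹) hv hpos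
  exact ⟨h.1, by linarith [h.2]⟩

lemma sum_eigenvalues_mul_sq_expVal_le (hρ : ρ.PosSemidef) {X : Matrix n n ℂ}
    (hX : X.IsHermitian) :
    ∑ i, hρ.1.eigenvalues i * (hρ.1.eigenvalues i * expVal X (hρ.1.eigenvectorBasis i) ^ 2) ≤
      (ρ * X * ρ * X).trace.re := by
  have h : (ρ * X * ρ * X).trace.re = RCLike.re (ρ * (Xᴴ * ρ * X)).trace := by
    simp only [hX.eq, Matrix.mul_assoc, RCLike.re_eq_complex_re]
  rw [h, re_trace_mul_eq_sum hρ.1]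
  gcongr with i
  exacts [hρ.eigenvalues_nonneg i, eigenvalues_mul_sq_expVal_le hρ X i]

lemma relEntropy_eq_sum (hρ : ρ.IsHermitian) :
    relEntropy ρ σ = ∑ i, hρ.eigenvalues i * (Real.logb 2 (hρ.eigenvalues i) -
      expVal (cfc (Real.logb 2) σ) (hρ.eigenvectorBasis i)) := by
  have h := congr_arg₂ (· - ·) (re_trace_mul_cfc hρ (Real.logb 2))
    (re_trace_mul_eq_sum hρ (cfc (Real.logb 2) σ))
  simpa only [mul_sub, Finset.sum_sub_distrib, relEntropy, Complex.sub_re, trace_sub, map_sub,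
    RCLike.re_eq_complex_re] using h

theorem relEntropy_le_collisionRelEntropy (hρ : ρ.PosSemidef) (hρtr : ρ.trace = 1)
    (hσ : σ.PosSemidef) (hker : ∀ w, σ *ᵥ w = 0 → ρ *ᵥ w = 0) :
    relEntropy ρ σ ≤ collisionRelEntropy ρ σ := by
  set p := hρ.1.eigenvalues
  set t : n → ℝ := fun i ↦ expVal (invSqrt σ) (hρ.1.eigenvectorBasis i)
  have hp (i : n) : 0 ≤ p i := hρ.eigenvalues_nonneg i
  have hp1 : ∑ i, p i = 1 := by simp [p, sum_eigenvalues, hρtr]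
  have hvec (i : n) (hi : p i ≠ 0) := expVal_invSqrt_pos_and_le_logb hσ
    (star_eigenvectorBasis_dotProduct_self hρ.1 i)
    fun w hw ↦ star_dotProduct_eigenvectorBasis_eq_zero hρ.1 hi (hker w hw)
  have hpt (i : n) (hi : p i ≠ 0) : 0 < p i * t i ^ 2 :=
    mul_pos ((hp i).lt_of_ne' hi) (pow_pos (hvec i hi).1 2)
  obtain ⟨hpos, hjensen⟩ :=
    sum_mul_le_map_sum_of_concaveOn (concaveOn_logb one_lt_two) hp hp1 hpt
  calc relEntropy ρ σ
      = ∑ i, p i * (Real.logb 2 (p i) -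
          expVal (cfc (Real.logb 2) σ) (hρ.1.eigenvectorBasis i)) := relEntropy_eq_sum hρ.1
    _ ≤ ∑ i, p i * Real.logb 2 (p i * t i ^ 2) := by
        refine Finset.sum_le_sum fun i _ ↦ ?_
        by_cases hi : p i = 0
        · simp [hi]
        obtain ⟨hti, hlog⟩ := hvec i hi
        rw [Real.logb_mul hi (pow_pos hti 2).ne', Real.logb_pow]
        exact mul_le_mul_of_nonneg_left (by push_cast; linarith) (hp i)
    _ ≤ Real.logb 2 (∑ i, p i * (p i * t i ^ 2)) := hjensen
    _ ≤ collisionRelEntropy ρ σ := Real.logb_le_logb_of_le one_lt_two hpos <|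
        sum_eigenvalues_mul_sq_expVal_le hρ (isHermitian_invSqrt_s18 hσ.1)

end RelativeEntropy

section PartialTrace

lemma mulVec_eq_zero_of_sum_mulVec_eq_zero {n 𝕜 ι : Type*} [RCLike 𝕜] [Fintype n] [Fintype ι]
    {A : ι → Matrix n n 𝕜} (hA : ∀ i, (A i).PosSemidef) {v : n → 𝕜} (hv : (∑ i, A i) *ᵥ v = 0)
    (i : ι) : A i *ᵥ v = 0 := by
  have hsum : ∑ i, star v ⬝ᵥ A i *ᵥ v = 0 := by
    rw [← dotProduct_sum, ← sum_mulVec, hv, dotProduct_zero]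
  rw [← (hA i).dotProduct_mulVec_zero_iff]
  exact (Finset.sum_eq_zero_iff_of_nonneg fun j _ ↦ (hA j).dotProduct_mulVec_nonneg v).1 hsum i
    (Finset.mem_univ i)

variable {α β : Type*} [Fintype α]

lemma posSemidef_ptraceLeft {ρ : Matrix (α × β) (α × β) ℂ} (hρ : ρ.PosSemidef) :
    (ptraceLeft ρ).PosSemidef := by
  have h : ptraceLeft ρ = ∑ a, ρ.submatrix (Prod.mk a) (Prod.mk a) := by
    ext i j
    simp [ptraceLeft, Matrix.sum_apply]
  exact h ▸ posSemidef_sum _ fun a _ ↦ hρ.submatrix (Prod.mk a)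

variable [DecidableEq α] [Fintype β]

section KetTensorOne

variable [DecidableEq β]

/-- The isometry `|a⟩ ⊗ 1` from `H_B` to `H_A ⊗ H_B`. -/
def ketTensorOne (β : Type*) [DecidableEq β] (a : α) : Matrix (α × β) β ℂ :=
  (1 : Matrix (α × β) (α × β) ℂ).submatrix id (Prod.mk a)

lemma ptraceLeft_eq_sum (M : Matrix (α × β) (α × β) ℂ) :
    ptraceLeft M = ∑ a : α, (ketTensorOne β a)ᴴ * M * ketTensorOne β a := by
  ext i j
  simp [ptraceLeft, ketTensorOne, Matrix.sum_apply, Matrix.mul_apply, one_apply]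

lemma sum_ketTensorOne_mul_conjTranspose :
    ∑ a : α, ketTensorOne β a * (ketTensorOne β a)ᴴ = 1 := by
  ext ⟨a, i⟩ ⟨b, j⟩
  simp [ketTensorOne, Matrix.sum_apply, Matrix.mul_apply, one_apply, ite_and, eq_comm]

lemma conjTranspose_ketTensorOne_mul_one_kronecker (a : α) (X : Matrix β β ℂ) :
    (ketTensorOne β a)ᴴ * ((1 : Matrix α α ℂ) ⊗ₖ X) = X * (ketTensorOne β a)ᴴ := by
  ext i ⟨b, j⟩
  simp [ketTensorOne, Matrix.mul_apply, one_apply, Fintype.sum_prod_type, ite_and, eq_comm]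

lemma one_kronecker_eq_sum (X : Matrix β β ℂ) :
    (1 : Matrix α α ℂ) ⊗ₖ X = ∑ a : α, ketTensorOne β a * X * (ketTensorOne β a)ᴴ := by
  simp only [Matrix.mul_assoc, ← conjTranspose_ketTensorOne_mul_one_kronecker]
  simp only [← Matrix.mul_assoc, ← Matrix.sum_mul, sum_ketTensorOne_mul_conjTranspose,
    Matrix.one_mul]

lemma mulVec_ketTensorOne_eq_zero {ρ : Matrix (α × β) (α × β) ℂ} (hρ : ρ.PosSemidef) {v : β → ℂ}
    (hv : ptraceLeft ρ *ᵥ v = 0) (a : α) : ρ *ᵥ ketTensorOne β a *ᵥ v = 0 := by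
  rw [ptraceLeft_eq_sum] at hv
  have h := mulVec_eq_zero_of_sum_mulVec_eq_zero
    (fun a ↦ hρ.conjTranspose_mul_mul_same (ketTensorOne β a)) hv a
  rw [← hρ.dotProduct_mulVec_zero_iff, star_mulVec, ← dotProduct_mulVec, mulVec_mulVec,
    mulVec_mulVec, h, dotProduct_zero]

end KetTensorOne

lemma trace_mul_one_kronecker (M : Matrix (α × β) (α × β) ℂ) (X : Matrix β β ℂ) :
    (M * ((1 : Matrix α α ℂ) ⊗ₖ X)).trace = (ptraceLeft M * X).trace := by
  classical
  simp only [one_kronecker_eq_sum, ptraceLeft_eq_sum, Matrix.mul_sum, Matrix.sum_mul, trace_sum]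
  refine Finset.sum_congr rfl fun a _ ↦ ?_
  rw [← Matrix.mul_assoc, trace_mul_comm]
  simp only [Matrix.mul_assoc]

lemma mulVec_eq_zero_of_one_kronecker_ptraceLeft {ρ : Matrix (α × β) (α × β) ℂ}
    (hρ : ρ.PosSemidef) {w : α × β → ℂ}
    (hw : ((1 : Matrix α α ℂ) ⊗ₖ ptraceLeft ρ) *ᵥ w = 0) : ρ *ᵥ w = 0 := by
  classical
  have hslice (a : α) : ptraceLeft ρ *ᵥ (ketTensorOne β a)ᴴ *ᵥ w = 0 := by
    rw [mulVec_mulVec, ← conjTranspose_ketTensorOne_mul_one_kronecker, ← mulVec_mulVec, hw,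
      mulVec_zero]
  have hw_sum : w = ∑ a, ketTensorOne β a *ᵥ (ketTensorOne β a)ᴴ *ᵥ w := by
    simp only [mulVec_mulVec, ← sum_mulVec, sum_ketTensorOne_mul_conjTranspose, one_mulVec]
  rw [hw_sum, mulVec_sum]
  exact Finset.sum_eq_zero fun a _ ↦ mulVec_ketTensorOne_eq_zero hρ (hslice a) a

variable [DecidableEq β]

/-- The ampliation `X ↦ 1_A ⊗ X`, bundled as a star homomorphism over `ℝ` because the continuous
functional calculus of Hermitian matrices is a real one. -/
def ampliation (α β 𝕜 : Type*) [RCLike 𝕜] [Fintype α] [DecidableEq α] [Fintype β] [DecidableEq β] :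
    Matrix β β 𝕜 →⋆ₐ[ℝ] Matrix (α × β) (α × β) 𝕜 where
  toFun X := (1 : Matrix α α 𝕜) ⊗ₖ X
  map_one' := one_kronecker_one
  map_mul' X Y := by rw [← mul_kronecker_mul, one_mul]
  map_zero' := kronecker_zero _
  map_add' X Y := kronecker_add _ X Y
  commutes' r := by
    simp only [Algebra.algebraMap_eq_smul_one, kronecker_smul, one_kronecker_one]
  map_star' X := by
    simp only [star_eq_conjTranspose, conjTranspose_kronecker, conjTranspose_one]

lemma one_kronecker_cfc {𝕜 : Type*} [RCLike 𝕜] {X : Matrix β β 𝕜} (hX : X.IsHermitian)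
    (f : ℝ → ℝ) : (1 : Matrix α α 𝕜) ⊗ₖ cfc f X = cfc f ((1 : Matrix α α 𝕜) ⊗ₖ X) :=
  StarAlgHomClass.map_cfc (ampliation α β 𝕜) f X (finite_real_spectrum.continuousOn f)
    (ampliation α β 𝕜).toLinearMap.continuous_of_finiteDimensional hX (hX.isSelfAdjoint.map _)

lemma one_kronecker_invSqrt {X : Matrix β β ℂ} (hX : X.IsHermitian) :
    (1 : Matrix α α ℂ) ⊗ₖ invSqrt X = invSqrt ((1 : Matrix α α ℂ) ⊗ₖ X) := by
  have h : ((1 : Matrix α α ℂ) ⊗ₖ X).IsHermitian := hX.isSelfAdjoint.map (ampliation α β ℂ)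
  rw [invSqrt_eq_cfc hX, invSqrt_eq_cfc h, one_kronecker_cfc hX]

lemma condH2_eq_neg_collisionRelEntropy {ρ : Matrix (α × β) (α × β) ℂ}
    (hρ : (ptraceLeft ρ).IsHermitian) :
    condH2 ρ = -collisionRelEntropy ρ ((1 : Matrix α α ℂ) ⊗ₖ ptraceLeft ρ) := by
  rw [condH2, collisionRelEntropy, one_kronecker_invSqrt hρ]

lemma vNEntropy_sub_vNEntropy_ptraceLeft {ρ : Matrix (α × β) (α × β) ℂ} (hρ : ρ.IsHermitian)
    (hρB : (ptraceLeft ρ).IsHermitian) :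
    vNEntropy ρ - vNEntropy (ptraceLeft ρ) =
      -relEntropy ρ ((1 : Matrix α α ℂ) ⊗ₖ ptraceLeft ρ) := by
  rw [vNEntropy_eq_neg_trace hρ, vNEntropy_eq_neg_trace hρB, relEntropy, ← one_kronecker_cfc hρB,
    Matrix.mul_sub, trace_sub, trace_mul_one_kronecker, Complex.sub_re]
  ring

end PartialTrace

/-- **The conditional Rényi 2-entropy is upper bounded by the conditional von Neumann
entropy**: `H₂(A|B)_ρ ≤ H(A|B)_ρ = H(ρ_AB) − H(ρ_B)`. -/
theorem condH2_le_condVN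
    {α β : Type*} [Fintype α] [Fintype β] [DecidableEq α] [DecidableEq β]
    (ρ : Matrix (α × β) (α × β) ℂ) (hρ : ρ.PosSemidef) (hρtr : ρ.trace = 1) :
    condH2 ρ ≤ vNEntropy ρ - vNEntropy (ptraceLeft ρ) := by
  have hρB : (ptraceLeft ρ).PosSemidef := posSemidef_ptraceLeft hρ
  have hσ : ((1 : Matrix α α ℂ) ⊗ₖ ptraceLeft ρ).PosSemidef := PosSemidef.one.kronecker hρB
  rw [condH2_eq_neg_collisionRelEntropy hρB.1, vNEntropy_sub_vNEntropy_ptraceLeft hρ.1 hρB.1]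
  exact neg_le_neg <| relEntropy_le_collisionRelEntropy hρ hρtr hσ fun _ ↦
    mulVec_eq_zero_of_one_kronecker_ptraceLeft hρ
end
end
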